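/- If I(α,β) < 1, then exact recovery in HSBM(n,p,q;k) is impossible: for every estimator σ̂ mapping k-uniform hypergraphs on [n] to {±1}^n, Pr_{(σ,ℋ)∼HSBM(n,p,q;k)}(σ̂(ℋ) ∉ {σ, −σ}) = 1 − o(1) as n → ∞. -/

import Mathlib

open Finset Filter Matrix

open scoped Classical

/-- The `k`-element subsets of `[n]`, i.e. the potential hyperedges. -/
abbrev KSet (n k : ℕ) := {e : Finset (Fin n) // e.card = k}

/-- A `±1` label vector (encoded by `Bool`) is balanced if it has equally many
`+1`'s (`true`) and `-1`'s (`false`). -/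
abbrev balanced {n : ℕ} (σ : Fin n → Bool) : Prop :=
  2 * (Finset.univ.filter (fun i => σ i = true)).card = n

/-- `e` is in-cluster w.r.t. `σ`: `σ` is constant on `e`. -/
abbrev inCluster {n : ℕ} (σ : Fin n → Bool) (e : Finset (Fin n)) : Prop :=
  ∀ i ∈ e, ∀ j ∈ e, σ i = σ j

/-- Probability that `e` appears as an edge, given the labels `σ`. -/
noncomputable def edgeP {n : ℕ} (p q : ℝ) (σ : Fin n → Bool) (e : Finset (Fin n)) : ℝ :=
  if inCluster σ e then p else q

/-- Probability of observing exactly the hypergraph with edge-indicator `E`, given labels `σ`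
(edges appear independently). -/
noncomputable def hypProb {n k : ℕ} (p q : ℝ) (σ : Fin n → Bool) (E : KSet n k → Bool) : ℝ :=
  ∏ e : KSet n k, if E e then edgeP p q σ e.1 else 1 - edgeP p q σ e.1

/-- Uniform prior on balanced label vectors. -/
noncomputable def sigProb (n : ℕ) (σ : Fin n → Bool) : ℝ :=
  if balanced σ then 1 / ((Finset.univ.filter (fun τ : Fin n → Bool => balanced τ)).card : ℝ)
  else 0

/-- Probability of an event `P` under the joint law `HSBM(n,p,q;k)` of `(σ, ℋ)`. -/
noncomputable def prEvent (n k : ℕ) (p q : ℝ)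
    (P : (Fin n → Bool) → (KSet n k → Bool) → Prop) : ℝ :=
  ∑ σ : Fin n → Bool, ∑ E : KSet n k → Bool,
    sigProb n σ * hypProb p q σ E * (if P σ E then 1 else 0)

/-- Global sign flip. -/
def negB {n : ℕ} (σ : Fin n → Bool) : Fin n → Bool := fun i => !(σ i)

/-- The edge probability parameter `α · log n / C(n-1, k-1)`. -/
noncomputable def pParam (k : ℕ) (α : ℝ) (n : ℕ) : ℝ :=
  α * Real.log n / ((n - 1).choose (k - 1) : ℝ)

/-!
Fix balanced labels `σ` and an exploration set `H` holding `M * h` vertices of either label, with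
`h` about `n ^ c'` for some `I(α,β) < c' < 1`. For a vertex `i ∈ H` consider the hyperedges whose
other vertices all lie outside `H` and carry one common label. If those for the label `true` and
those for the label `false` contribute equally many edges, changing the label of `i` leaves their
joint likelihood unchanged. The two counts are independent binomial variables, which agree with
probability at least `n ^ (-c)` for any `c > I(α,β)`; distinct vertices of `H` use disjoint sets of
hyperedges, and the other hyperedges that the label of `i` can affect meet `H` in a second vertex
and are too rare to matter. Splitting each label class of `H` into `M` groups of `h` vertices, with
`c < c'` every group therefore contains such an indifferent vertex with high probability.
Exchanging the labels of a fixed indifferent vertex with label `false` and of one indifferent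
vertex with label `true` per group gives `M` balanced label vectors, each at least half as likely
as `σ`. Hence the posterior probability of `σ` is at most `2 / M`, no estimator can do better, and
`M` is arbitrary.
-/

section ProductBernoulli

lemma dependsOn_indicator_one {ι Ω : Type*} {S : Set (ι → Ω)} {J : Set ι}
    (hS : DependsOn (· ∈ S) J) : DependsOn (S.indicator (1 : (ι → Ω) → ℝ)) J := fun x y hxy => by
  simp only [Set.indicator_apply, hS hxy, Pi.one_apply]

/-- If some `D i` occurs, the weights `D i / ∑ j, D j` sum to one; hence if moreover every `D i`
that occurs comes with `(W i)ᶜ`, the weighted average of the latter is one. -/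
lemma indicator_forall_notMem_inter_le {Ω κ : Type*} (K : Finset κ) (D W : κ → Set Ω) :
    {x | ∀ i ∈ K, x ∉ D i ∩ W i}.indicator (1 : Ω → ℝ) ≤
      ∏ i ∈ K, (1 - (D i).indicator 1) +
        ∑ i ∈ K, (D i).indicator 1 / (∑ j ∈ K, (D j).indicator 1) * (W i)ᶜ.indicator 1 := by
  have hpos (S : Set Ω) (x : Ω) : (0 : ℝ) ≤ S.indicator 1 x :=
    Set.indicator_nonneg (fun _ _ => zero_le_one) x
  have hprod (x : Ω) : 0 ≤ ∏ i ∈ K, (1 - (D i).indicator (1 : Ω → ℝ) x) :=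
    prod_nonneg fun i _ => sub_nonneg.2 (Set.indicator_le_self' (fun _ _ => zero_le_one) x)
  have hsum (x : Ω) : 0 ≤ ∑ i ∈ K, (D i).indicator (1 : Ω → ℝ) x /
      (∑ j ∈ K, (D j).indicator 1 x) * (W i)ᶜ.indicator 1 x :=
    sum_nonneg fun i _ => mul_nonneg (div_nonneg (hpos _ x) (sum_nonneg fun j _ => hpos _ x))
      (hpos _ x)
  refine Set.indicator_le' (fun x hx => ?_) fun x _ => ?_ <;>
    simp only [Pi.add_apply, Finset.prod_apply, Finset.sum_apply, Pi.mul_apply, Pi.div_apply,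
      Pi.sub_apply, Pi.one_apply]
  · by_cases hD : ∃ i ∈ K, x ∈ D i
    · obtain ⟨i, hi, hxi⟩ := hD
      have htotal : 0 < ∑ j ∈ K, (D j).indicator (1 : Ω → ℝ) x :=
        sum_pos' (fun j _ => hpos _ x) ⟨i, hi, by simp [hxi]⟩
      have hterm : ∀ j ∈ K, (D j).indicator (1 : Ω → ℝ) x / (∑ l ∈ K, (D l).indicator 1 x) *
          (W j)ᶜ.indicator 1 x =
            (D j).indicator (1 : Ω → ℝ) x / ∑ l ∈ K, (D l).indicator 1 x := fun j hj => by
        by_cases hxj : x ∈ D j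
        · have hxW : x ∉ W j := fun hxW => hx j hj ⟨hxj, hxW⟩
          simp [hxW]
        · simp [hxj]
      rw [sum_congr rfl hterm, ← sum_div, div_self htotal.ne']
      exact le_add_of_nonneg_left (hprod x)
    · push Not at hD
      rw [prod_eq_one fun i hi => by simp [hD i hi]]
      exact le_add_of_nonneg_right (hsum x)
  · exact add_nonneg (hprod x) (hsum x)

variable {ι : Type*} [Fintype ι]

/-- The probability of the outcome `E` when the coordinates `e : ι` are independent and
`E e = true` has probability `w e`. -/
noncomputable def bernoulliWeight (w : ι → ℝ) (E : ι → Bool) : ℝ :=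
  ∏ e, if E e then w e else 1 - w e

lemma bernoulliWeight_nonneg {w : ι → ℝ} (hw : ∀ e, w e ∈ Set.Icc (0 : ℝ) 1) (E : ι → Bool) :
    0 ≤ bernoulliWeight w E :=
  prod_nonneg fun e _ => by
    split_ifs
    exacts [(hw e).1, sub_nonneg.2 (hw e).2]

variable [DecidableEq ι]

/-- Expectation under the product Bernoulli weights, as a linear functional. -/
noncomputable def bernoulliExp (w : ι → ℝ) : ((ι → Bool) → ℝ) →ₗ[ℝ] ℝ :=
  ∑ E, bernoulliWeight w E • LinearMap.proj E

/-- Probability of an event under the product Bernoulli weights. -/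
noncomputable def bernoulliProb (w : ι → ℝ) (S : Set (ι → Bool)) : ℝ :=
  bernoulliExp w (S.indicator 1)

lemma bernoulliExp_apply (w : ι → ℝ) (F : (ι → Bool) → ℝ) :
    bernoulliExp w F = ∑ E, bernoulliWeight w E * F E := by
  simp [bernoulliExp, LinearMap.sum_apply]

lemma bernoulliExp_prod (w : ι → ℝ) (A : Finset ι) (g : ι → Bool → ℝ) :
    bernoulliExp w (fun E => ∏ e ∈ A, g e (E e)) =
      ∏ e ∈ A, (w e * g e true + (1 - w e) * g e false) := by
  have hterm (E : ι → Bool) : bernoulliWeight w E * ∏ e ∈ A, g e (E e) =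
      ∏ e, (if E e then w e else 1 - w e) * if e ∈ A then g e (E e) else 1 := by
    rw [bernoulliWeight, prod_mul_distrib, Fintype.prod_ite_mem]
  simp_rw [bernoulliExp_apply, hterm, ← Fintype.piFinset_univ,
    ← prod_univ_sum (fun _ => univ) fun e b =>
      (if b then w e else 1 - w e) * if e ∈ A then g e b else 1]
  rw [← Fintype.prod_ite_mem A]
  refine prod_congr rfl fun e _ => ?_
  by_cases he : e ∈ A <;> simp [he]

lemma bernoulliExp_one (w : ι → ℝ) : bernoulliExp w 1 = 1 := by
  simpa [Pi.one_def] using bernoulliExp_prod w ∅ fun _ _ => 0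

lemma sum_bernoulliWeight (w : ι → ℝ) : ∑ E, bernoulliWeight w E = 1 := by
  simpa [bernoulliExp_apply] using bernoulliExp_one w

lemma bernoulliExp_mono {w : ι → ℝ} (hw : ∀ e, w e ∈ Set.Icc (0 : ℝ) 1)
    {F G : (ι → Bool) → ℝ} (h : F ≤ G) : bernoulliExp w F ≤ bernoulliExp w G := by
  simp_rw [bernoulliExp_apply]
  gcongr with E
  exacts [bernoulliWeight_nonneg hw E, h E]

lemma bernoulliProb_mono {w : ι → ℝ} (hw : ∀ e, w e ∈ Set.Icc (0 : ℝ) 1)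
    {S T : Set (ι → Bool)} (h : S ⊆ T) : bernoulliProb w S ≤ bernoulliProb w T :=
  bernoulliExp_mono hw (Set.indicator_le_indicator_of_subset h fun _ => zero_le_one)

lemma bernoulliProb_biUnion_le {w : ι → ℝ} (hw : ∀ e, w e ∈ Set.Icc (0 : ℝ) 1)
    {κ : Type*} (K : Finset κ) (S : κ → Set (ι → Bool)) :
    bernoulliProb w (⋃ i ∈ K, S i) ≤ ∑ i ∈ K, bernoulliProb w (S i) := by
  simp_rw [bernoulliProb, ← map_sum]
  refine bernoulliExp_mono hw (Set.indicator_le' (fun E hE => ?_) fun E _ => ?_)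
  · obtain ⟨i, hi, hEi⟩ := Set.mem_iUnion₂.1 hE
    calc (1 : ℝ) = (S i).indicator 1 E := by simp [hEi]
      _ ≤ ∑ j ∈ K, (S j).indicator 1 E :=
        single_le_sum (f := fun j => (S j).indicator (1 : (ι → Bool) → ℝ) E)
          (fun j _ => Set.indicator_nonneg (fun _ _ => zero_le_one) E) hi
      _ = (∑ j ∈ K, (S j).indicator 1) E := (Finset.sum_apply ..).symm
  · rw [Finset.sum_apply]
    exact sum_nonneg fun j _ => Set.indicator_nonneg (fun _ _ => zero_le_one) E

lemma bernoulliProb_coord (w : ι → ℝ) (e : ι) : bernoulliProb w {E | E e = true} = w e := by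
  have h := bernoulliExp_prod w {e} fun _ b => if b then 1 else 0
  simp only [prod_singleton, if_true, mul_one, Bool.false_eq_true, if_false, mul_zero,
    add_zero] at h
  rw [bernoulliProb, ← h]
  congr 1
  ext E
  simp [Set.indicator_apply]

/-- On a pair of independent outcomes, exchanging the coordinates in `J` preserves the
product weight and turns `F x.1 * G x.1` into `F x.1 * G x.2`. -/
lemma bernoulliExp_mul_of_dependsOn (w : ι → ℝ) {F G : (ι → Bool) → ℝ} {J J' : Set ι}
    (hF : DependsOn F J) (hG : DependsOn G J') (hJ : Disjoint J J') :
    bernoulliExp w (F * G) = bernoulliExp w F * bernoulliExp w G := by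
  let exchange (x : (ι → Bool) × (ι → Bool)) : (ι → Bool) × (ι → Bool) :=
    (J.piecewise x.1 x.2, J.piecewise x.2 x.1)
  have hinv : Function.Involutive exchange := fun x => by
    ext e <;> by_cases he : e ∈ J <;> simp [exchange, he]
  have hweight (x) : bernoulliWeight w (exchange x).1 * bernoulliWeight w (exchange x).2 =
      bernoulliWeight w x.1 * bernoulliWeight w x.2 := by
    simp_rw [bernoulliWeight, ← prod_mul_distrib]
    refine prod_congr rfl fun e _ => ?_
    by_cases he : e ∈ J <;> simp [exchange, he, mul_comm]
  have hFx (x) : F (exchange x).1 = F x.1 := hF fun e he => by simp [exchange, he]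
  have hGx (x) : G (exchange x).2 = G x.1 := hG fun e he => by
    simp [exchange, Set.disjoint_right.1 hJ he]
  calc bernoulliExp w (F * G)
      = ∑ x : (ι → Bool) × (ι → Bool),
          bernoulliWeight w x.1 * bernoulliWeight w x.2 * (F x.1 * G x.1) := by
        simp_rw [bernoulliExp_apply, Fintype.sum_prod_type, mul_right_comm _ (bernoulliWeight w _),
          ← mul_sum, sum_bernoulliWeight, mul_one, Pi.mul_apply]
    _ = ∑ x : (ι → Bool) × (ι → Bool),
          bernoulliWeight w x.1 * bernoulliWeight w x.2 * (F x.1 * G x.2) :=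
        Fintype.sum_equiv hinv.toPerm _ _ fun x => by
          rw [Function.Involutive.coe_toPerm, hweight, hFx, hGx]
    _ = bernoulliExp w F * bernoulliExp w G := by
        simp_rw [bernoulliExp_apply, sum_mul_sum, Fintype.sum_prod_type, mul_mul_mul_comm]

lemma bernoulliExp_prod_of_dependsOn (w : ι → ℝ) {κ : Type*} (K : Finset κ) {B : κ → Set ι}
    (hB : (K : Set κ).PairwiseDisjoint B) {F : κ → (ι → Bool) → ℝ}
    (hF : ∀ i ∈ K, DependsOn (F i) (B i)) :
    bernoulliExp w (∏ i ∈ K, F i) = ∏ i ∈ K, bernoulliExp w (F i) := by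
  induction K using Finset.induction_on with
  | empty => simp [bernoulliExp_one]
  | insert i K hi ih =>
    rw [coe_insert, Set.pairwiseDisjoint_insert_of_notMem (by simpa using hi)] at hB
    have hprod : DependsOn (∏ j ∈ K, F j) (⋃ j ∈ K, B j) := fun x y hxy => by
      simp_rw [Finset.prod_apply]
      exact prod_congr rfl fun j hj =>
        hF j (mem_insert_of_mem hj) fun e he => hxy e (Set.mem_biUnion hj he)
    rw [prod_insert hi, prod_insert hi, bernoulliExp_mul_of_dependsOn w (hF i (mem_insert_self i K))
      hprod (Set.disjoint_iUnion₂_right.2 fun j hj => hB.2 j hj),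
      ih hB.1 fun j hj => hF j (mem_insert_of_mem hj)]

lemma bernoulliExp_mul_indicator_compl_le {w : ι → ℝ} (hw : ∀ e, w e ∈ Set.Icc (0 : ℝ) 1)
    {F : (ι → Bool) → ℝ} (hF0 : 0 ≤ F) {W : Set (ι → Bool)} {J Q : Set ι} (hJQ : Disjoint J Q)
    (hF : DependsOn F J) (hW : DependsOn (· ∈ W) Q) {η : ℝ} (hη : bernoulliProb w Wᶜ ≤ η) :
    bernoulliExp w (F * Wᶜ.indicator 1) ≤ bernoulliExp w F * η := by
  have hWc : DependsOn (· ∈ Wᶜ) Q := fun x y hxy => congrArg Not (hW hxy)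
  rw [bernoulliExp_mul_of_dependsOn w hF (dependsOn_indicator_one hWc) hJQ]
  refine mul_le_mul_of_nonneg_left hη ?_
  simpa using bernoulliExp_mono hw hF0

/-- The events `D i` are independent, while the `W i` may depend on each other arbitrarily. In the
averaging bound the weights `D i / ∑ j, D j` are independent of `W i`, so no union bound over the
`(W i)ᶜ` is needed. -/
lemma bernoulliProb_forall_notMem_inter_le {w : ι → ℝ} (hw : ∀ e, w e ∈ Set.Icc (0 : ℝ) 1)
    {κ : Type*} (K : Finset κ) {D W : κ → Set (ι → Bool)} {B : κ → Set ι} {Q : Set ι}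
    (hB : (K : Set κ).PairwiseDisjoint B) (hBQ : ∀ i ∈ K, Disjoint (B i) Q)
    (hD : ∀ i ∈ K, DependsOn (· ∈ D i) (B i)) (hW : ∀ i ∈ K, DependsOn (· ∈ W i) Q)
    {r η : ℝ} (hr : ∀ i ∈ K, bernoulliProb w (D i) = r)
    (hη : ∀ i ∈ K, bernoulliProb w (W i)ᶜ ≤ η) (hη0 : 0 ≤ η) :
    bernoulliProb w {E | ∀ i ∈ K, E ∉ D i ∩ W i} ≤ (1 - r) ^ #K + η := by
  let d (i : κ) : (ι → Bool) → ℝ := (D i).indicator 1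
  let share (i : κ) : (ι → Bool) → ℝ := d i / ∑ j ∈ K, d j
  have hd0 (i E) : 0 ≤ d i E := Set.indicator_nonneg (fun _ _ => zero_le_one) E
  have hddep (i) (hi : i ∈ K) : DependsOn (d i) (B i) := dependsOn_indicator_one (hD i hi)
  have hprod : bernoulliExp w (∏ i ∈ K, (1 - d i)) = (1 - r) ^ #K := by
    rw [bernoulliExp_prod_of_dependsOn w K hB fun i hi x y hxy => by simp [hddep i hi hxy]]
    exact prod_eq_pow_card fun i hi => by rw [map_sub, bernoulliExp_one, ← hr i hi, bernoulliProb]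
  have hshare0 (i) : 0 ≤ share i := fun E => by
    simpa [share] using div_nonneg (hd0 i E) (sum_nonneg fun j _ => hd0 j E)
  have hshare (i) (hi : i ∈ K) : DependsOn (share i) (⋃ j ∈ K, B j) := fun x y hxy => by
    have hdj (j) (hj : j ∈ K) : d j x = d j y :=
      hddep j hj fun e he => hxy e (Set.mem_biUnion hj he)
    simp only [share, Pi.div_apply, Finset.sum_apply, hdj i hi, sum_congr rfl hdj]
  have hsum : bernoulliExp w (∑ i ∈ K, share i) ≤ 1 := by
    rw [← bernoulliExp_one w]
    refine bernoulliExp_mono hw fun E => ?_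
    simp only [share, Finset.sum_apply, Pi.div_apply, ← sum_div]
    exact div_self_le_one _
  calc bernoulliProb w {E | ∀ i ∈ K, E ∉ D i ∩ W i}
      ≤ bernoulliExp w (∏ i ∈ K, (1 - d i) + ∑ i ∈ K, share i * (W i)ᶜ.indicator 1) :=
        bernoulliExp_mono hw (indicator_forall_notMem_inter_le K D W)
    _ ≤ (1 - r) ^ #K + ∑ i ∈ K, bernoulliExp w (share i) * η := by
        rw [map_add, hprod, map_sum]
        gcongr with i hi
        exact bernoulliExp_mul_indicator_compl_le hw (hshare0 i)
          (Set.disjoint_iUnion₂_left.2 hBQ) (hshare i hi) (hW i hi) (hη i hi)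
    _ ≤ (1 - r) ^ #K + η := by
        rw [← sum_mul, ← map_sum]
        gcongr
        exact mul_le_of_le_one_left hη0 hsum

end ProductBernoulli

section TrueCount

variable {ι : Type*}

/-- The number of coordinates in `A` at which the outcome `E` is `true`. -/
def trueCount (A : Finset ι) (E : ι → Bool) : ℕ :=
  #{e ∈ A | E e = true}

lemma trueCount_congr {A : Finset ι} {E E' : ι → Bool} (h : ∀ e ∈ A, E e = E' e) :
    trueCount A E = trueCount A E' := by
  rw [trueCount, trueCount, filter_congr fun e he => by rw [h e he]]

lemma trueCount_le_card (A : Finset ι) (E : ι → Bool) : trueCount A E ≤ #A :=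
  card_filter_le _ _

lemma dependsOn_trueCount (A : Finset ι) (P : ℕ → Prop) :
    DependsOn (· ∈ {E : ι → Bool | P (trueCount A E)}) (A : Set ι) := fun E E' h => by
  simp only [Set.mem_ofPred_eq, trueCount_congr fun e he => h e he]

lemma prod_ite_eq_pow_trueCount (A : Finset ι) (E : ι → Bool) (p : ℝ) :
    ∏ e ∈ A, (if E e then p else 1 - p) = p ^ trueCount A E * (1 - p) ^ (#A - trueCount A E) := by
  have hcard := card_filter_add_card_filter_not (s := A) (fun e => E e = true)
  rw [prod_ite, prod_const, prod_const, trueCount, ← hcard, Nat.add_sub_cancel_left]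

/-- The probability that a binomial variable with parameters `N` and `p` equals `t`. -/
noncomputable def binomialProb (N : ℕ) (p : ℝ) (t : ℕ) : ℝ :=
  N.choose t * (p ^ t * (1 - p) ^ (N - t))

/-- The probability that independent binomial variables with parameters `(N, p)` and `(N, q)`
coincide. -/
noncomputable def binomialCollision (N : ℕ) (p q : ℝ) : ℝ :=
  ∑ t ∈ range (N + 1), binomialProb N p t * binomialProb N q t

lemma binomialCollision_comm (N : ℕ) (p q : ℝ) :
    binomialCollision N p q = binomialCollision N q p :=
  sum_congr rfl fun _ _ => mul_comm _ _

lemma binomialProb_nonneg (N : ℕ) {p : ℝ} (hp : p ∈ Set.Icc (0 : ℝ) 1) (t : ℕ) :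
    0 ≤ binomialProb N p t :=
  mul_nonneg (Nat.cast_nonneg _)
    (mul_nonneg (pow_nonneg hp.1 _) (pow_nonneg (sub_nonneg.2 hp.2) _))

lemma sum_binomialProb (N : ℕ) (p : ℝ) : ∑ t ∈ range (N + 1), binomialProb N p t = 1 := by
  simp_rw [binomialProb, mul_comm (Nat.choose N _ : ℝ), ← add_pow, add_sub_cancel, one_pow]

lemma binomialCollision_nonneg (N : ℕ) {p q : ℝ} (hp : p ∈ Set.Icc (0 : ℝ) 1)
    (hq : q ∈ Set.Icc (0 : ℝ) 1) : 0 ≤ binomialCollision N p q :=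
  sum_nonneg fun t _ => mul_nonneg (binomialProb_nonneg N hp t) (binomialProb_nonneg N hq t)

lemma binomialCollision_le_one (N : ℕ) {p q : ℝ} (hp : p ∈ Set.Icc (0 : ℝ) 1)
    (hq : q ∈ Set.Icc (0 : ℝ) 1) : binomialCollision N p q ≤ 1 :=
  calc binomialCollision N p q ≤ ∑ t ∈ range (N + 1), binomialProb N p t :=
        sum_le_sum fun t ht => mul_le_of_le_one_right (binomialProb_nonneg N hp t)
          ((single_le_sum (fun i _ => binomialProb_nonneg N hq i) ht).trans_eq
            (sum_binomialProb N q))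
    _ = 1 := sum_binomialProb N p

variable [Fintype ι] [DecidableEq ι]

lemma bernoulliProb_forall_eq (w : ι → ℝ) (A : Finset ι) (E₀ : ι → Bool) :
    bernoulliProb w {E | ∀ e ∈ A, E e = E₀ e} = ∏ e ∈ A, if E₀ e then w e else 1 - w e := by
  have hterm (e : ι) : (w e * (if true = E₀ e then 1 else 0) +
      (1 - w e) * if false = E₀ e then 1 else 0) = if E₀ e then w e else 1 - w e := by
    cases E₀ e <;> simp
  simp_rw [← hterm]
  rw [← bernoulliExp_prod w A fun e b => if b = E₀ e then 1 else 0, bernoulliProb]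
  congr 1
  ext E
  simp [Set.indicator_apply, prod_boole]

lemma bernoulliProb_trueCount_eq {w : ι → ℝ} {A : Finset ι} {p : ℝ} (hA : ∀ e ∈ A, w e = p)
    (t : ℕ) : bernoulliProb w {E | trueCount A E = t} = binomialProb (#A) p t := by
  have hsplit : {E | trueCount A E = t}.indicator (1 : (ι → Bool) → ℝ) =
      ∑ S ∈ powersetCard t A, {E | ∀ e ∈ A, E e = decide (e ∈ S)}.indicator 1 := by
    ext E
    have hiff (S) (hS : S ∈ powersetCard t A) :
        (∀ e ∈ A, E e = decide (e ∈ S)) ↔ {e ∈ A | E e = true} = S := by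
      have hSA := (mem_powersetCard.1 hS).1
      grind
    have hterm (S) (hS : S ∈ powersetCard t A) :
        {E | ∀ e ∈ A, E e = decide (e ∈ S)}.indicator (1 : (ι → Bool) → ℝ) E =
          if {e ∈ A | E e = true} = S then 1 else 0 := by
      simp only [Set.indicator_apply, Set.mem_ofPred_eq, hiff S hS, Pi.one_apply]
    rw [Finset.sum_apply, sum_congr rfl hterm, sum_ite_eq]
    simp [Set.indicator_apply, mem_powersetCard, trueCount]
  have hpattern (S) (hS : S ∈ powersetCard t A) :
      bernoulliProb w {E | ∀ e ∈ A, E e = decide (e ∈ S)} = p ^ t * (1 - p) ^ (#A - t) := by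
    obtain ⟨hSA, rfl⟩ := mem_powersetCard.1 hS
    have hcount : trueCount A (fun e => decide (e ∈ S)) = #S := by
      simp [trueCount, filter_mem_eq_inter, inter_eq_right.2 hSA]
    rw [bernoulliProb_forall_eq, prod_congr rfl fun e he => by rw [hA e he],
      prod_ite_eq_pow_trueCount, hcount]
  rw [bernoulliProb, hsplit, map_sum]
  exact (sum_congr rfl hpattern).trans (by simp [binomialProb])

lemma bernoulliProb_trueCount_eq_trueCount {w : ι → ℝ} {A B : Finset ι} {p q : ℝ} {N : ℕ}
    (hA : ∀ e ∈ A, w e = p) (hB : ∀ e ∈ B, w e = q) (hAB : Disjoint A B)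
    (hcardA : #A = N) (hcardB : #B = N) :
    bernoulliProb w {E | trueCount A E = trueCount B E} = binomialCollision N p q := by
  have hsplit : {E | trueCount A E = trueCount B E}.indicator (1 : (ι → Bool) → ℝ) =
      ∑ t ∈ range (N + 1), {E | trueCount A E = t}.indicator 1 *
        {E | trueCount B E = t}.indicator 1 := by
    ext E
    have hmem : trueCount B E ∈ range (N + 1) :=
      mem_range_succ_iff.2 (hcardB ▸ trueCount_le_card B E)
    have hterm (t : ℕ) : {E | trueCount A E = t}.indicator (1 : (ι → Bool) → ℝ) E *
        {E | trueCount B E = t}.indicator 1 E =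
          if trueCount B E = t then (if trueCount A E = t then 1 else 0) else 0 := by
      simp [Set.indicator_apply]
    simp only [Finset.sum_apply, Pi.mul_apply, hterm, sum_ite_eq, hmem, if_true]
    simp [Set.indicator_apply]
  rw [bernoulliProb, hsplit, map_sum, binomialCollision]
  refine sum_congr rfl fun t _ => ?_
  rw [bernoulliExp_mul_of_dependsOn w (dependsOn_indicator_one (dependsOn_trueCount A (· = t)))
      (dependsOn_indicator_one (dependsOn_trueCount B (· = t))) (disjoint_coe.2 hAB),
    ← bernoulliProb, ← bernoulliProb, bernoulliProb_trueCount_eq hA, bernoulliProb_trueCount_eq hB,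
    hcardA, hcardB]

end TrueCount

section BinomialCollision

lemma sum_range_mul_binomial (x y : ℝ) (N : ℕ) :
    ∑ t ∈ range (N + 1), t * (x ^ t * y ^ (N - t) * N.choose t) = N * x * (x + y) ^ (N - 1) := by
  cases N with
  | zero => simp
  | succ N =>
    rw [sum_range_succ', Nat.cast_zero, zero_mul, add_zero, Nat.add_sub_cancel, add_pow, mul_sum]
    refine sum_congr rfl fun t _ => ?_
    have h : ((N : ℝ) + 1) * N.choose t = (N + 1).choose (t + 1) * (t + 1) := by
      exact_mod_cast Nat.add_one_mul_choose_eq N t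
    rw [Nat.succ_sub_succ]
    push_cast
    linear_combination -(x ^ (t + 1) * y ^ (N - t)) * h

/-- Markov's inequality for the binomial distribution. -/
lemma add_pow_le_two_mul_sum_filter_lt {x y : ℝ} (hx : 0 ≤ x) (hy : 0 ≤ y) {N T : ℕ} (hT : 0 < T)
    (hmean : 2 * (N * x) ≤ (x + y) * T) :
    (x + y) ^ N ≤ 2 * ∑ t ∈ range (N + 1) with t < T, x ^ t * y ^ (N - t) * N.choose t := by
  have hT' : (0 : ℝ) < T := Nat.cast_pos.2 hT
  have hmoment : 2 * (N * x * (x + y) ^ (N - 1)) ≤ (x + y) ^ N * T := by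
    cases N with
    | zero => simp
    | succ N =>
      rw [Nat.add_sub_cancel, pow_succ]
      nlinarith [pow_nonneg (add_nonneg hx hy) N]
  have hmarkov : ∑ t ∈ range (N + 1), ((T : ℝ) - t) * (x ^ t * y ^ (N - t) * N.choose t) ≤
      T * ∑ t ∈ range (N + 1) with t < T, x ^ t * y ^ (N - t) * N.choose t := by
    rw [mul_sum, sum_filter]
    refine sum_le_sum fun t _ => ?_
    have hterm : 0 ≤ x ^ t * y ^ (N - t) * N.choose t := by positivity
    split_ifs with htT
    · exact mul_le_mul_of_nonneg_right (sub_le_self _ t.cast_nonneg) hterm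
    · exact mul_nonpos_of_nonpos_of_nonneg
        (sub_nonpos.2 (Nat.cast_le.2 (not_lt.1 htT))) hterm
  simp_rw [sub_mul] at hmarkov
  rw [sum_sub_distrib, ← mul_sum, ← add_pow, sum_range_mul_binomial] at hmarkov
  refine le_of_mul_le_mul_left ?_ hT'
  linarith

lemma sq_add_pow_le_mul_sum_sq {x y : ℝ} (hx : 0 ≤ x) (hy : 0 ≤ y) {N T : ℕ} (hT : 0 < T)
    (hmean : 2 * (N * x) ≤ (x + y) * T) :
    ((x + y) ^ N) ^ 2 ≤ 4 * T * ∑ t ∈ range (N + 1), (x ^ t * y ^ (N - t) * N.choose t) ^ 2 := by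
  have hcard : #{t ∈ range (N + 1) | t < T} ≤ T := by
    simpa using card_le_card (show {t ∈ range (N + 1) | t < T} ⊆ range T by grind)
  calc ((x + y) ^ N) ^ 2
      ≤ (2 * ∑ t ∈ range (N + 1) with t < T, x ^ t * y ^ (N - t) * N.choose t) ^ 2 := by
        gcongr
        exact add_pow_le_two_mul_sum_filter_lt hx hy hT hmean
    _ ≤ 4 * (#{t ∈ range (N + 1) | t < T} *
          ∑ t ∈ range (N + 1) with t < T, (x ^ t * y ^ (N - t) * N.choose t) ^ 2) := by
        rw [mul_pow]
        linarith [sq_sum_le_card_mul_sum_sq (s := {t ∈ range (N + 1) | t < T})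
          (f := fun t => x ^ t * y ^ (N - t) * (N.choose t : ℝ))]
    _ ≤ 4 * (T * ∑ t ∈ range (N + 1), (x ^ t * y ^ (N - t) * N.choose t) ^ 2) := by
        gcongr
        exact filter_subset _ _
    _ = 4 * T * ∑ t ∈ range (N + 1), (x ^ t * y ^ (N - t) * N.choose t) ^ 2 := by ring

/-- The Bhattacharyya coefficient of two Bernoulli distributions. -/
noncomputable def bhattacharyya (p q : ℝ) : ℝ :=
  √(p * q) + √((1 - p) * (1 - q))

lemma bhattacharyya_pow_sq_le {p q : ℝ} (hp : p ∈ Set.Icc (0 : ℝ) 1) (hq : q ∈ Set.Icc (0 : ℝ) 1)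
    {N T : ℕ} (hT : 0 < T) (hmean : 2 * (N * √(p * q)) ≤ bhattacharyya p q * T) :
    (bhattacharyya p q ^ N) ^ 2 ≤ 4 * T * binomialCollision N p q := by
  have hterm (t : ℕ) : binomialProb N p t * binomialProb N q t =
      (√(p * q) ^ t * √((1 - p) * (1 - q)) ^ (N - t) * N.choose t) ^ 2 := by
    rw [binomialProb, binomialProb, mul_pow, mul_pow, pow_right_comm, pow_right_comm _ (N - t),
      Real.sq_sqrt (mul_nonneg hp.1 hq.1),
      Real.sq_sqrt (mul_nonneg (sub_nonneg.2 hp.2) (sub_nonneg.2 hq.2)), mul_pow, mul_pow]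
    ring
  simp_rw [binomialCollision, hterm]
  exact sq_add_pow_le_mul_sum_sq (Real.sqrt_nonneg _) (Real.sqrt_nonneg _) hT hmean

lemma bhattacharyya_pow_sq_le_mul_binomialCollision {p q : ℝ} (hp : p ∈ Set.Icc (0 : ℝ) (1 / 2))
    (hq : q ∈ Set.Icc (0 : ℝ) (1 / 2)) {N : ℕ} {μ : ℝ} (hμ : N * √(p * q) ≤ μ) :
    (bhattacharyya p q ^ N) ^ 2 ≤ (16 * μ + 8) * binomialCollision N p q := by
  obtain ⟨hp0, hp2⟩ := hp
  obtain ⟨hq0, hq2⟩ := hq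
  have hp1 : p ∈ Set.Icc (0 : ℝ) 1 := ⟨hp0, by linarith⟩
  have hq1 : q ∈ Set.Icc (0 : ℝ) 1 := ⟨hq0, by linarith⟩
  have hμ0 : 0 ≤ μ := le_trans (by positivity) hμ
  have hhalf : 1 / 2 ≤ bhattacharyya p q := by
    refine le_add_of_nonneg_of_le (Real.sqrt_nonneg _) (Real.le_sqrt_of_sq_le ?_)
    nlinarith
  have hT_lower : 4 * μ ≤ (⌈4 * μ⌉₊ + 1 : ℕ) := by
    push_cast
    linarith [Nat.le_ceil (4 * μ)]
  have hT_upper : 4 * ((⌈4 * μ⌉₊ + 1 : ℕ) : ℝ) ≤ 16 * μ + 8 := by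
    push_cast
    linarith [Nat.ceil_lt_add_one (mul_nonneg zero_le_four hμ0)]
  have hmean : 2 * (N * √(p * q)) ≤ bhattacharyya p q * (⌈4 * μ⌉₊ + 1 : ℕ) :=
    calc 2 * (N * √(p * q)) ≤ 1 / 2 * (4 * μ) := by linarith
      _ ≤ bhattacharyya p q * (⌈4 * μ⌉₊ + 1 : ℕ) := by gcongr
  exact (bhattacharyya_pow_sq_le hp1 hq1 (Nat.succ_pos _) hmean).trans
    (mul_le_mul_of_nonneg_right hT_upper (binomialCollision_nonneg N hp1 hq1))

/-- The upper bound for `1 - bhattacharyya p q` that comes from replacing the squared difference of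
`√(1 - p)` and `√(1 - q)` by that of `p` and `q`. -/
noncomputable def bhattacharyyaDefect (p q : ℝ) : ℝ :=
  ((√p - √q) ^ 2 + (p - q) ^ 2) / 2

lemma bhattacharyyaDefect_nonneg (p q : ℝ) : 0 ≤ bhattacharyyaDefect p q :=
  div_nonneg (add_nonneg (sq_nonneg _) (sq_nonneg _)) zero_le_two

lemma one_sub_bhattacharyyaDefect_le {p q : ℝ} (hp : p ∈ Set.Icc (0 : ℝ) (3 / 4))
    (hq : q ∈ Set.Icc (0 : ℝ) (3 / 4)) : 1 - bhattacharyyaDefect p q ≤ bhattacharyya p q := by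
  have hp1 : 0 ≤ 1 - p := by linarith [hp.2]
  have hq1 : 0 ≤ 1 - q := by linarith [hq.2]
  have hcompl : (√(1 - p) - √(1 - q)) ^ 2 ≤ (p - q) ^ 2 := by
    have hsum : 1 ≤ √(1 - p) + √(1 - q) := by
      linarith [Real.le_sqrt_of_sq_le (show (1 / 2 : ℝ) ^ 2 ≤ 1 - p by linarith [hp.2]),
        Real.le_sqrt_of_sq_le (show (1 / 2 : ℝ) ^ 2 ≤ 1 - q by linarith [hq.2])]
    have hfactor : p - q = -((√(1 - p) - √(1 - q)) * (√(1 - p) + √(1 - q))) := by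
      linear_combination Real.sq_sqrt hp1 - Real.sq_sqrt hq1
    rw [hfactor, neg_sq, mul_pow]
    exact le_mul_of_one_le_right (sq_nonneg _) (one_le_pow₀ hsum)
  rw [bhattacharyyaDefect, bhattacharyya, Real.sqrt_mul hp.1, Real.sqrt_mul hp1]
  nlinarith [Real.sq_sqrt hp.1, Real.sq_sqrt hq.1, Real.sq_sqrt hp1, Real.sq_sqrt hq1]

end BinomialCollision

section Asymptotics

open Asymptotics

lemma pParam_nonneg (k n : ℕ) {γ : ℝ} (hγ : 0 ≤ γ) : 0 ≤ pParam k γ n :=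
  div_nonneg (mul_nonneg hγ (Real.log_natCast_nonneg n)) (Nat.cast_nonneg _)

lemma pParam_eq_mul (k n : ℕ) (γ : ℝ) : pParam k γ n = γ * pParam k 1 n := by
  rw [pParam, pParam, one_mul, mul_div_assoc]

lemma choose_mul_pParam {k n : ℕ} (hkn : k ≤ n) (γ : ℝ) :
    ((n - 1).choose (k - 1) : ℝ) * pParam k γ n = γ * Real.log n := by
  have h : ((n - 1).choose (k - 1) : ℝ) ≠ 0 := by
    exact_mod_cast (Nat.choose_pos (Nat.sub_le_sub_right hkn 1)).ne'
  rw [pParam, mul_div_cancel₀ _ h]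

lemma choose_sub_two_mul_pParam {k n : ℕ} (hk : 2 ≤ k) (hkn : k ≤ n) (γ : ℝ) :
    ((n - 2).choose (k - 2) : ℝ) * pParam k γ n = (k - 1) * γ * (Real.log n / (n - 1)) := by
  have hn : (n : ℝ) - 1 ≠ 0 := by
    have : (2 : ℝ) ≤ n := by exact_mod_cast hk.trans hkn
    linarith
  have hpascal : ((n : ℝ) - 1) * (n - 2).choose (k - 2) = (n - 1).choose (k - 1) * (k - 1) := by
    obtain ⟨a, rfl⟩ := Nat.exists_eq_add_of_le' hk
    obtain ⟨b, rfl⟩ := Nat.exists_eq_add_of_le' (hk.trans hkn)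
    have h := Nat.add_one_mul_choose_eq b a
    push_cast [Nat.add_sub_cancel, Nat.add_succ_sub_one, add_sub_assoc]
    norm_num
    exact_mod_cast h
  rw [← mul_div_assoc, eq_div_iff hn, mul_assoc _ γ, ← choose_mul_pParam hkn γ]
  linear_combination pParam k γ n * hpascal

lemma tendsto_choose_sub_two_mul_pParam {k : ℕ} (hk : 2 ≤ k) (γ : ℝ) :
    Tendsto (fun n : ℕ => ((n - 2).choose (k - 2) : ℝ) * pParam k γ n) atTop (nhds 0) := by
  have hlog : Tendsto (fun n : ℕ => Real.log n / ((n : ℝ) - 1)) atTop (nhds 0) := by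
    have h := (Real.tendsto_pow_log_div_mul_add_atTop 1 (-1) 1 one_ne_zero).comp
      tendsto_natCast_atTop_atTop
    simpa [Function.comp_def, ← sub_eq_add_neg] using h
  have h := hlog.const_mul (((k : ℝ) - 1) * γ)
  rw [mul_zero] at h
  refine h.congr' ?_
  filter_upwards [eventually_ge_atTop k] with n hn
  exact (choose_sub_two_mul_pParam hk hn γ).symm

lemma tendsto_pParam {k : ℕ} (hk : 2 ≤ k) (γ : ℝ) :
    Tendsto (fun n : ℕ => pParam k γ n) atTop (nhds 0) := by
  suffices h : Tendsto (fun n : ℕ => pParam k 1 n) atTop (nhds 0) by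
    simpa [← pParam_eq_mul] using h.const_mul γ
  refine squeeze_zero' (Eventually.of_forall fun n => pParam_nonneg k n zero_le_one) ?_
    (tendsto_choose_sub_two_mul_pParam hk 1)
  filter_upwards [eventually_ge_atTop k] with n hn
  refine le_mul_of_one_le_left (pParam_nonneg k n zero_le_one) ?_
  exact_mod_cast Nat.choose_pos (Nat.sub_le_sub_right hn 2)

lemma tendsto_two_mul_atTop : Tendsto (fun m : ℕ => 2 * m) atTop atTop :=
  tendsto_id.const_mul_atTop' two_pos

lemma tendsto_choose_div_choose (r : ℕ) :
    Tendsto (fun m : ℕ => (m.choose r : ℝ) / (2 * m - 1).choose r) atTop (nhds (1 / 2 ^ r)) := by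
  have hsub : Tendsto (fun m : ℕ => 2 * m - 1) atTop atTop :=
    (tendsto_sub_atTop_nat 1).comp tendsto_two_mul_atTop
  have hequiv := (isEquivalent_choose r).div ((isEquivalent_choose r).comp_tendsto hsub)
  have hratio : Tendsto (fun m : ℕ => (m : ℝ) / (2 * m - 1 : ℕ)) atTop (nhds (1 / 2)) := by
    have h := (tendsto_natCast_div_add_atTop (-(1 / 2 : ℝ))).div_const 2
    refine h.congr' ?_
    filter_upwards [eventually_ge_atTop 1] with m hm
    push_cast [Nat.cast_sub (show 1 ≤ 2 * m by omega)]
    rw [div_div, add_mul]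
    ring_nf
  rw [← _root_.one_div_pow]
  refine hequiv.tendsto_nhds_iff.2 ((hratio.pow r).congr fun m => ?_)
  have hfact : (r.factorial : ℝ) ≠ 0 := Nat.cast_ne_zero.2 r.factorial_ne_zero
  rw [div_pow, Pi.div_apply, Function.comp_apply, div_div_div_cancel_right₀ hfact]

lemma exp_neg_div_one_sub_le {δ : ℝ} (hδ : δ < 1) : Real.exp (-(δ / (1 - δ))) ≤ 1 - δ := by
  have hpos : 0 < 1 - δ := sub_pos.2 hδ
  rw [← Real.le_log_iff_exp_le hpos]
  convert Real.one_sub_inv_le_log_of_pos hpos using 1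
  field_simp
  ring

lemma bhattacharyyaDefect_pParam (k n : ℕ) {α β : ℝ} (hα : 0 ≤ α) (hβ : 0 ≤ β) :
    bhattacharyyaDefect (pParam k α n) (pParam k β n) =
      pParam k 1 n * ((√α - √β) ^ 2 + (α - β) ^ 2 * pParam k 1 n) / 2 := by
  rw [bhattacharyyaDefect, pParam_eq_mul k n α, pParam_eq_mul k n β, Real.sqrt_mul hα,
    Real.sqrt_mul hβ, ← sub_mul, mul_pow, Real.sq_sqrt (pParam_nonneg k n zero_le_one)]
  ring

lemma tendsto_bhattacharyyaDefect_pParam {k : ℕ} (hk : 2 ≤ k) {α β : ℝ} (hα : 0 ≤ α)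
    (hβ : 0 ≤ β) : Tendsto (fun n : ℕ => bhattacharyyaDefect (pParam k α n) (pParam k β n))
      atTop (nhds 0) := by
  have hz := tendsto_pParam hk 1
  have h := (hz.mul ((hz.const_mul ((α - β) ^ 2)).const_add ((√α - √β) ^ 2))).div_const 2
  rw [zero_mul, zero_div] at h
  exact h.congr fun n => (bhattacharyyaDefect_pParam k n hα hβ).symm

lemma eventually_choose_mul_bhattacharyyaDefect_le {k : ℕ} (hk : 2 ≤ k) {α β : ℝ} (hα : 0 ≤ α)
    (hβ : 0 ≤ β) {c : ℝ} (hc : (√α - √β) ^ 2 / 2 ^ (k - 1) < c) :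
    ∀ᶠ m : ℕ in atTop, 2 * (m.choose (k - 1) *
      (bhattacharyyaDefect (pParam k α (2 * m)) (pParam k β (2 * m)) /
        (1 - bhattacharyyaDefect (pParam k α (2 * m)) (pParam k β (2 * m))))) ≤
      Real.log (2 * m : ℕ) * c := by
  let z (m : ℕ) : ℝ := pParam k 1 (2 * m)
  let rate (m : ℕ) : ℝ := (√α - √β) ^ 2 + (α - β) ^ 2 * z m
  let defect (m : ℕ) : ℝ := bhattacharyyaDefect (pParam k α (2 * m)) (pParam k β (2 * m))
  have hz : Tendsto z atTop (nhds 0) := (tendsto_pParam hk 1).comp tendsto_two_mul_atTop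
  have hrate : Tendsto rate atTop (nhds ((√α - √β) ^ 2)) := by
    simpa using (hz.const_mul ((α - β) ^ 2)).const_add ((√α - √β) ^ 2)
  have hdefect : Tendsto defect atTop (nhds 0) :=
    (tendsto_bhattacharyyaDefect_pParam hk hα hβ).comp tendsto_two_mul_atTop
  have hlim : Tendsto (fun m : ℕ => (m.choose (k - 1) : ℝ) / (2 * m - 1).choose (k - 1) *
      (rate m / (1 - defect m))) atTop (nhds ((√α - √β) ^ 2 / 2 ^ (k - 1))) := by
    have h := (tendsto_choose_div_choose (k - 1)).mul
      (hrate.div (hdefect.const_sub 1) (by norm_num))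
    rwa [sub_zero, div_one, one_div_mul_eq_div] at h
  filter_upwards [hlim.eventually_le_const hc] with m hm
  calc 2 * (m.choose (k - 1) * (defect m / (1 - defect m)))
      = Real.log (2 * m : ℕ) * ((m.choose (k - 1) : ℝ) / (2 * m - 1).choose (k - 1) *
          (rate m / (1 - defect m))) := by
        rw [show defect m / (1 - defect m) = z m * rate m / 2 / (1 - defect m) by
          rw [← bhattacharyyaDefect_pParam k (2 * m) hα hβ]]
        simp only [z, pParam]
        ring
    _ ≤ Real.log (2 * m : ℕ) * c := mul_le_mul_of_nonneg_left hm (Real.log_natCast_nonneg _)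

lemma eventually_rpow_neg_le_bhattacharyya {k : ℕ} (hk : 2 ≤ k) {α β : ℝ} (hα : 0 ≤ α)
    (hβ : 0 ≤ β) {c : ℝ} (hc : (√α - √β) ^ 2 / 2 ^ (k - 1) < c) :
    ∀ᶠ m : ℕ in atTop, ∀ N ≤ m.choose (k - 1), ((2 * m : ℕ) : ℝ) ^ (-c) ≤
      (bhattacharyya (pParam k α (2 * m)) (pParam k β (2 * m)) ^ N) ^ 2 := by
  let defect (m : ℕ) : ℝ := bhattacharyyaDefect (pParam k α (2 * m)) (pParam k β (2 * m))
  have hdefect : Tendsto defect atTop (nhds 0) :=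
    (tendsto_bhattacharyyaDefect_pParam hk hα hβ).comp tendsto_two_mul_atTop
  have hsmall (γ : ℝ) : ∀ᶠ m : ℕ in atTop, pParam k γ (2 * m) ≤ 3 / 4 :=
    ((tendsto_pParam hk γ).comp tendsto_two_mul_atTop).eventually_le_const (by norm_num)
  filter_upwards [eventually_choose_mul_bhattacharyyaDefect_le hk hα hβ hc,
    hdefect.eventually_lt_const one_pos, hsmall α, hsmall β, eventually_gt_atTop 0]
    with m hexponent hdefect1 hp hq hm N hN
  have hratio : 0 ≤ defect m / (1 - defect m) :=
    div_nonneg (bhattacharyyaDefect_nonneg _ _) (sub_nonneg.2 hdefect1.le)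
  have hmono : N * (defect m / (1 - defect m)) ≤
      m.choose (k - 1) * (defect m / (1 - defect m)) :=
    mul_le_mul_of_nonneg_right (Nat.cast_le.2 hN) hratio
  calc ((2 * m : ℕ) : ℝ) ^ (-c) = Real.exp (-(Real.log (2 * m : ℕ) * c)) := by
        rw [Real.rpow_def_of_pos (by exact_mod_cast Nat.mul_pos two_pos hm), mul_neg]
    _ ≤ Real.exp (-(2 * (N * (defect m / (1 - defect m))))) :=
        Real.exp_le_exp.2 (neg_le_neg
          ((mul_le_mul_of_nonneg_left hmono zero_le_two).trans hexponent))
    _ = (Real.exp (-(defect m / (1 - defect m))) ^ N) ^ 2 := by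
        rw [← pow_mul, ← Real.exp_nat_mul]
        push_cast
        ring_nf
    _ ≤ (bhattacharyya (pParam k α (2 * m)) (pParam k β (2 * m)) ^ N) ^ 2 := by
        gcongr
        exact (exp_neg_div_one_sub_le hdefect1).trans (one_sub_bhattacharyyaDefect_le
          ⟨pParam_nonneg k _ hα, hp⟩ ⟨pParam_nonneg k _ hβ, hq⟩)

lemma choose_mul_sqrt_pParam_mul_pParam_le {k m : ℕ} (hm : 0 < m) (hkm : k ≤ m)
    {α β : ℝ} (hα : 0 ≤ α) (hβ : 0 ≤ β) :
    m.choose (k - 1) * √(pParam k α (2 * m) * pParam k β (2 * m)) ≤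
      √(α * β) * Real.log (2 * m : ℕ) := by
  have hz : 0 ≤ pParam k 1 (2 * m) := pParam_nonneg k _ zero_le_one
  have hchoose : (m.choose (k - 1) : ℝ) ≤ (2 * m - 1).choose (k - 1) := by
    exact_mod_cast Nat.choose_le_choose (k - 1) (Nat.le_sub_one_of_lt (lt_two_mul_self hm))
  rw [pParam_eq_mul k _ α, pParam_eq_mul k _ β, mul_mul_mul_comm, Real.sqrt_mul (mul_nonneg hα hβ),
    Real.sqrt_mul_self hz, mul_left_comm]
  gcongr
  calc m.choose (k - 1) * pParam k 1 (2 * m)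
      ≤ (2 * m - 1).choose (k - 1) * pParam k 1 (2 * m) := by gcongr
    _ = Real.log (2 * m : ℕ) := by rw [choose_mul_pParam (by omega), one_mul]

lemma eventually_mul_log_add_le_rpow (a b : ℝ) {ε : ℝ} (hε : 0 < ε) :
    ∀ᶠ m : ℕ in atTop, a * Real.log (2 * m : ℕ) + b ≤ ((2 * m : ℕ) : ℝ) ^ ε := by
  have hlog := (isLittleO_log_rpow_atTop hε).const_mul_left a
  have hconst : (fun _ : ℝ => b) =o[atTop] fun x : ℝ => x ^ ε :=
    isLittleO_const_left.2 (Or.inr (tendsto_norm_atTop_atTop.comp (tendsto_rpow_atTop hε)))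
  have h := (tendsto_natCast_atTop_atTop.comp tendsto_two_mul_atTop).eventually
    ((hlog.add hconst).bound one_pos)
  filter_upwards [h] with m hm
  rw [Function.comp_apply, one_mul,
    Real.norm_of_nonneg (Real.rpow_nonneg (Nat.cast_nonneg _) _)] at hm
  exact (le_abs_self _).trans hm

/-- Up to a logarithmic factor, the collision probability is at least the squared Bhattacharyya
coefficient of the two binomial laws, which decays like `n ^ (-I(α,β))`. -/
lemma eventually_rpow_neg_le_binomialCollision {k : ℕ} (hk : 2 ≤ k) {α β : ℝ} (hα : 0 ≤ α)
    (hβ : 0 ≤ β) {c : ℝ} (hc : (√α - √β) ^ 2 / 2 ^ (k - 1) < c) :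
    ∀ᶠ m : ℕ in atTop, ∀ N ≤ m.choose (k - 1), ((2 * m : ℕ) : ℝ) ^ (-c) ≤
      binomialCollision N (pParam k α (2 * m)) (pParam k β (2 * m)) := by
  obtain ⟨c₁, hc₁, hc₁c⟩ := exists_between hc
  have hsmall (γ : ℝ) : ∀ᶠ m : ℕ in atTop, pParam k γ (2 * m) ≤ 1 / 2 :=
    ((tendsto_pParam hk γ).comp tendsto_two_mul_atTop).eventually_le_const (by norm_num)
  filter_upwards [eventually_rpow_neg_le_bhattacharyya hk hα hβ hc₁,
    eventually_mul_log_add_le_rpow (16 * √(α * β)) 8 (sub_pos.2 hc₁c), hsmall α, hsmall β,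
    eventually_ge_atTop k] with m hbhatt hlog hp hq hm N hN
  set p := pParam k α (2 * m)
  set q := pParam k β (2 * m)
  set μ := √(α * β) * Real.log (2 * m : ℕ)
  have hm0 : 0 < m := two_pos.trans_le (hk.trans hm)
  have hmean : N * √(p * q) ≤ μ :=
    le_trans (by gcongr) (choose_mul_sqrt_pParam_mul_pParam_le hm0 hm hα hβ)
  have hcollision := bhattacharyya_pow_sq_le_mul_binomialCollision
    ⟨pParam_nonneg k _ hα, hp⟩ ⟨pParam_nonneg k _ hβ, hq⟩ hmean
  have hpos : (0 : ℝ) < (2 * m : ℕ) := by exact_mod_cast Nat.mul_pos two_pos hm0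
  have hμ : 0 ≤ μ := mul_nonneg (Real.sqrt_nonneg _) (Real.log_natCast_nonneg _)
  refine le_of_mul_le_mul_left ?_ (show 0 < 16 * μ + 8 by linarith)
  calc (16 * μ + 8) * ((2 * m : ℕ) : ℝ) ^ (-c)
      ≤ ((2 * m : ℕ) : ℝ) ^ (c - c₁) * ((2 * m : ℕ) : ℝ) ^ (-c) := by
        gcongr
        rwa [← mul_assoc]
    _ = ((2 * m : ℕ) : ℝ) ^ (-c₁) := by rw [← Real.rpow_add hpos]; ring_nf
    _ ≤ (16 * μ + 8) * binomialCollision N p q := (hbhatt N hN).trans hcollision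

end Asymptotics

section Flips

variable {n k : ℕ}

/-- Change of the label of the vertex `i`. -/
def flipAt (σ : Fin n → Bool) (i : Fin n) : Fin n → Bool :=
  Function.update σ i (!σ i)

lemma flipAt_self (σ : Fin n → Bool) (i : Fin n) : flipAt σ i i = !σ i :=
  Function.update_self ..

lemma flipAt_of_ne (σ : Fin n → Bool) {i j : Fin n} (h : j ≠ i) : flipAt σ i j = σ j :=
  Function.update_of_ne h ..

/-- The potential hyperedges through `i` whose remaining vertices lie outside the exploration set
`H` and all carry the label `b`. -/
noncomputable def starEdges (k : ℕ) (σ : Fin n → Bool) (H : Finset (Fin n)) (i : Fin n)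
    (b : Bool) : Finset (KSet n k) :=
  {e | i ∈ e.1 ∧ ∀ j ∈ e.1, j ≠ i → j ∉ H ∧ σ j = b}

/-- The potential hyperedges through `i` that meet the exploration set `H` in another vertex. -/
noncomputable def contactEdges (k : ℕ) (H : Finset (Fin n)) (i : Fin n) : Finset (KSet n k) :=
  {e | i ∈ e.1 ∧ ∃ j ∈ e.1, j ≠ i ∧ j ∈ H}

lemma mem_starEdges {σ : Fin n → Bool} {H : Finset (Fin n)} {i : Fin n} {b : Bool}
    {e : KSet n k} :
    e ∈ starEdges k σ H i b ↔ i ∈ e.1 ∧ ∀ j ∈ e.1, j ≠ i → j ∉ H ∧ σ j = b := by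
  simp [starEdges]

lemma mem_contactEdges {H : Finset (Fin n)} {i : Fin n} {e : KSet n k} :
    e ∈ contactEdges k H i ↔ i ∈ e.1 ∧ ∃ j ∈ e.1, j ≠ i ∧ j ∈ H := by
  simp [contactEdges]

lemma inCluster_iff_of_mem_starEdges (hk : 2 ≤ k) {σ : Fin n → Bool} {H : Finset (Fin n)}
    {i : Fin n} {b : Bool} {e : KSet n k} (he : e ∈ starEdges k σ H i b) :
    inCluster σ e.1 ↔ σ i = b := by
  obtain ⟨hie, hothers⟩ := mem_starEdges.1 he
  obtain ⟨j, hje, hji⟩ := exists_mem_ne (by rw [e.2]; omega) i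
  refine ⟨fun h => (h i hie j hje).trans (hothers j hje hji).2, fun h => ?_⟩
  have hlabel : ∀ l ∈ e.1, σ l = b := fun l hl => by
    by_cases hli : l = i
    exacts [hli ▸ h, (hothers l hl hli).2]
  exact fun l hl l' hl' => (hlabel l hl).trans (hlabel l' hl').symm

lemma disjoint_starEdges_true_false (hk : 2 ≤ k) (σ : Fin n → Bool) (H : Finset (Fin n))
    (i : Fin n) : Disjoint (starEdges k σ H i true) (starEdges k σ H i false) :=
  disjoint_left.2 fun e he he' => by
    obtain ⟨j, hje, hji⟩ := exists_mem_ne (by rw [e.2]; omega) i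
    simpa [((mem_starEdges.1 he).2 j hje hji).2] using ((mem_starEdges.1 he').2 j hje hji).2

lemma disjoint_starEdges_of_ne {σ : Fin n → Bool} {H : Finset (Fin n)} {i j : Fin n}
    (hj : j ∈ H) (hij : i ≠ j) (b b' : Bool) :
    Disjoint (starEdges k σ H i b) (starEdges k σ H j b') :=
  disjoint_left.2 fun _ he he' =>
    ((mem_starEdges.1 he).2 j (mem_starEdges.1 he').1 hij.symm).1 hj

lemma disjoint_starEdges_contactEdges {σ : Fin n → Bool} {H : Finset (Fin n)} (i : Fin n)
    {j : Fin n} (hj : j ∈ H) (b : Bool) :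
    Disjoint (starEdges k σ H i b) (contactEdges k H j) :=
  disjoint_left.2 fun e he he' => by
    have hoff := (mem_starEdges.1 he).2
    obtain ⟨hje, l, hle, hlj, hlH⟩ := mem_contactEdges.1 he'
    rcases eq_or_ne j i with rfl | hji
    exacts [(hoff l hle hlj).1 hlH, (hoff j hje hji).1 hj]

lemma starEdges_congr {σ τ : Fin n → Bool} {H : Finset (Fin n)} {i : Fin n}
    (h : ∀ j ∉ H, j ≠ i → σ j = τ j) (b : Bool) : starEdges k σ H i b = starEdges k τ H i b := by
  ext e
  simp only [mem_starEdges]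
  grind

lemma starEdges_flipAt {H : Finset (Fin n)} (σ : Fin n → Bool) {i : Fin n} (hi : i ∈ H)
    (j : Fin n) (b : Bool) : starEdges k (flipAt σ i) H j b = starEdges k σ H j b :=
  starEdges_congr (fun _ hl _ => flipAt_of_ne σ fun hli => hl (hli ▸ hi)) b

lemma card_starEdges (hk : 1 ≤ k) (σ : Fin n → Bool) {H : Finset (Fin n)} {i : Fin n}
    (hi : i ∈ H) (b : Bool) :
    #(starEdges k σ H i b) = (#{j | j ∉ H ∧ σ j = b}).choose (k - 1) := by
  rw [← card_powersetCard]
  refine card_bij (fun e _ => e.1.erase i) (fun e he => ?_) (fun e he e' he' h => ?_)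
    fun S hS => ?_
  · obtain ⟨hie, hothers⟩ := mem_starEdges.1 he
    refine mem_powersetCard.2 ⟨fun j hj => ?_, by rw [card_erase_of_mem hie, e.2]⟩
    obtain ⟨hji, hje⟩ := mem_erase.1 hj
    simpa using hothers j hje hji
  · refine Subtype.ext ?_
    rw [← insert_erase (mem_starEdges.1 he).1, h, insert_erase (mem_starEdges.1 he').1]
  · obtain ⟨hsub, hcard⟩ := mem_powersetCard.1 hS
    have hiS : i ∉ S := fun h => by simpa [hi] using hsub h
    refine ⟨⟨insert i S, by rw [card_insert_of_notMem hiS]; omega⟩, ?_, erase_insert hiS⟩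
    refine mem_starEdges.2 ⟨mem_insert_self i S, fun j hj hji => ?_⟩
    simpa using hsub (mem_of_mem_insert_of_ne hj hji)

lemma card_filter_mem_mem_le {i j : Fin n} (hij : i ≠ j) :
    #{e : KSet n k | i ∈ e.1 ∧ j ∈ e.1} ≤ (n - 2).choose (k - 2) := by
  have hcompl : #({i, j}ᶜ : Finset (Fin n)) = n - 2 := by
    rw [card_compl, card_pair hij, Fintype.card_fin]
  rw [← hcompl, ← card_powersetCard]
  refine card_le_card_of_injOn (fun e => e.1 \ {i, j}) (fun e he => ?_) fun e he e' he' h => ?_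
  · have hsub : {i, j} ⊆ e.1 := by grind
    refine mem_powersetCard.2 ⟨fun l hl => mem_compl.2 (mem_sdiff.1 hl).2, ?_⟩
    rw [card_sdiff_of_subset hsub, e.2, card_pair hij]
  · have hsub : {i, j} ⊆ e.1 := by grind
    have hsub' : {i, j} ⊆ e'.1 := by grind
    rw [Subtype.ext_iff, ← sdiff_union_of_subset hsub, ← sdiff_union_of_subset hsub']
    exact congrArg (· ∪ {i, j}) h

lemma card_contactEdges_le (H : Finset (Fin n)) (i : Fin n) :
    #(contactEdges k H i) ≤ #H * (n - 2).choose (k - 2) := by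
  have hsub : contactEdges k H i ⊆
      (H.erase i).biUnion fun j => {e : KSet n k | i ∈ e.1 ∧ j ∈ e.1} := fun e he => by
    obtain ⟨hie, j, hje, hji, hjH⟩ := mem_contactEdges.1 he
    simpa using ⟨j, ⟨hji, hjH⟩, hie, hje⟩
  calc #(contactEdges k H i)
      ≤ #((H.erase i).biUnion fun j => {e : KSet n k | i ∈ e.1 ∧ j ∈ e.1}) := card_le_card hsub
    _ ≤ #(H.erase i) * (n - 2).choose (k - 2) :=
      card_biUnion_le_card_mul _ _ _ fun j hj => card_filter_mem_mem_le (ne_of_mem_erase hj).symm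
    _ ≤ #H * (n - 2).choose (k - 2) := Nat.mul_le_mul_right _ (card_erase_le ..)

/-- An edge through `i` outside the stars and the contact edges has two further vertices with
different labels, so it is cross-cluster whatever the label of `i`. -/
lemma edgeP_flipAt (p q : ℝ) {σ : Fin n → Bool} {H : Finset (Fin n)} {i : Fin n} {e : KSet n k}
    (hstar : ∀ b, e ∉ starEdges k σ H i b) (hcontact : e ∉ contactEdges k H i) :
    edgeP p q (flipAt σ i) e.1 = edgeP p q σ e.1 := by
  by_cases hie : i ∈ e.1
  · have hmixed (b : Bool) : ∃ j ∈ e.1, j ≠ i ∧ σ j = b := by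
      have hnotstar := hstar !b
      rw [mem_starEdges] at hnotstar
      push Not at hnotstar
      obtain ⟨j, hje, hji, hj⟩ := hnotstar hie
      have hjH : j ∉ H := fun hjH => hcontact (mem_contactEdges.2 ⟨hie, j, hje, hji, hjH⟩)
      exact ⟨j, hje, hji, by simpa using hj hjH⟩
    obtain ⟨j, hje, hji, hj⟩ := hmixed true
    obtain ⟨l, hle, hli, hl⟩ := hmixed false
    have hcross : ¬ inCluster σ e.1 := fun h => by simpa [hj, hl] using h j hje l hle
    have hcross' : ¬ inCluster (flipAt σ i) e.1 := fun h => by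
      simpa [flipAt_of_ne σ hji, flipAt_of_ne σ hli, hj, hl] using h j hje l hle
    rw [edgeP, edgeP, if_neg hcross, if_neg hcross']
  · have hagree : ∀ j ∈ e.1, flipAt σ i j = σ j := fun j hj =>
      flipAt_of_ne σ (ne_of_mem_of_not_mem hj hie)
    have hiff : inCluster (flipAt σ i) e.1 ↔ inCluster σ e.1 :=
      forall₂_congr fun j hj => forall₂_congr fun l hl => by rw [hagree j hj, hagree l hl]
    simp only [edgeP, hiff]

end Flips

section Indifference

variable {n k : ℕ} {p q s : ℝ} {σ : Fin n → Bool} {H : Finset (Fin n)} {i j : Fin n}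
  {E : KSet n k → Bool}

/-- A vertex of the exploration set `H` is indifferent if its contact edges are absent and its two
stars contain equally many edges of the hypergraph. Up to the factor contributed by the contact
edges, its label then does not change the likelihood. -/
def IsIndifferent (σ : Fin n → Bool) (H : Finset (Fin n)) (i : Fin n) (E : KSet n k → Bool) :
    Prop :=
  (∀ e ∈ contactEdges k H i, E e = false) ∧
    trueCount (starEdges k σ H i true) E = trueCount (starEdges k σ H i false) E

lemma IsIndifferent.flip (hE : IsIndifferent σ H j E) (hi : i ∈ H) :
    IsIndifferent (flipAt σ i) H j E :=
  ⟨hE.1, by rw [starEdges_flipAt σ hi, starEdges_flipAt σ hi, hE.2]⟩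

/-- The factor contributed to `hypProb p q σ E` by the potential hyperedge `e`. -/
noncomputable def edgeLikelihood (p q : ℝ) (σ : Fin n → Bool) (E : KSet n k → Bool)
    (e : KSet n k) : ℝ :=
  if E e then edgeP p q σ e.1 else 1 - edgeP p q σ e.1

lemma hypProb_eq_prod (p q : ℝ) (σ : Fin n → Bool) (E : KSet n k → Bool) :
    hypProb p q σ E = ∏ e, edgeLikelihood p q σ E e := rfl

lemma hypProb_eq_bernoulliWeight (p q : ℝ) (σ : Fin n → Bool) (E : KSet n k → Bool) :
    hypProb p q σ E = bernoulliWeight (fun e => edgeP p q σ e.1) E := rfl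

lemma edgeP_mem {S : Set ℝ} (hp : p ∈ S) (hq : q ∈ S) (σ : Fin n → Bool) (e : Finset (Fin n)) :
    edgeP p q σ e ∈ S := by
  rw [edgeP]
  split_ifs
  exacts [hp, hq]

lemma edgeLikelihood_nonneg (hp : p ∈ Set.Icc (0 : ℝ) 1) (hq : q ∈ Set.Icc (0 : ℝ) 1)
    (σ : Fin n → Bool) (E : KSet n k → Bool) (e : KSet n k) : 0 ≤ edgeLikelihood p q σ E e := by
  rw [edgeLikelihood]
  split_ifs
  exacts [(edgeP_mem hp hq σ e.1).1, sub_nonneg.2 (edgeP_mem hp hq σ e.1).2]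

lemma hypProb_nonneg (hp : p ∈ Set.Icc (0 : ℝ) 1) (hq : q ∈ Set.Icc (0 : ℝ) 1)
    (σ : Fin n → Bool) (E : KSet n k → Bool) : 0 ≤ hypProb p q σ E :=
  prod_nonneg fun e _ => edgeLikelihood_nonneg hp hq σ E e

lemma prod_eq_contactEdges_mul_starEdges_mul (hk : 2 ≤ k) (σ : Fin n → Bool) (hi : i ∈ H)
    (g : KSet n k → ℝ) :
    ∏ e, g e = (∏ e ∈ contactEdges k H i, g e) *
      ((∏ e ∈ starEdges k σ H i true, g e) * ∏ e ∈ starEdges k σ H i false, g e) *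
      ∏ e ∈ (contactEdges k H i ∪ (starEdges k σ H i true ∪ starEdges k σ H i false))ᶜ, g e := by
  have hcontact : Disjoint (contactEdges k H i)
      (starEdges k σ H i true ∪ starEdges k σ H i false) :=
    disjoint_union_right.2 ⟨(disjoint_starEdges_contactEdges i hi true).symm,
      (disjoint_starEdges_contactEdges i hi false).symm⟩
  rw [← prod_union (disjoint_starEdges_true_false hk σ H i), ← prod_union hcontact,
    prod_mul_prod_compl]

lemma prod_starEdges_edgeLikelihood (hk : 2 ≤ k) (p q : ℝ) (σ : Fin n → Bool)
    (H : Finset (Fin n)) (i : Fin n) (b : Bool) (E : KSet n k → Bool) :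
    ∏ e ∈ starEdges k σ H i b, edgeLikelihood p q σ E e =
      (if σ i = b then p else q) ^ trueCount (starEdges k σ H i b) E *
        (1 - if σ i = b then p else q) ^
          (#(starEdges k σ H i b) - trueCount (starEdges k σ H i b) E) := by
  rw [← prod_ite_eq_pow_trueCount]
  refine prod_congr rfl fun e he => ?_
  simp only [edgeLikelihood, edgeP, inCluster_iff_of_mem_starEdges hk he]

lemma IsIndifferent.prod_starEdges_flipAt (hE : IsIndifferent σ H i E) (hk : 2 ≤ k) (hi : i ∈ H)
    (hcard : #(starEdges k σ H i true) = #(starEdges k σ H i false)) (p q : ℝ) :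
    (∏ e ∈ starEdges k σ H i true, edgeLikelihood p q (flipAt σ i) E e) *
        ∏ e ∈ starEdges k σ H i false, edgeLikelihood p q (flipAt σ i) E e =
      (∏ e ∈ starEdges k σ H i true, edgeLikelihood p q σ E e) *
        ∏ e ∈ starEdges k σ H i false, edgeLikelihood p q σ E e := by
  have hflip (b : Bool) := prod_starEdges_edgeLikelihood hk p q (flipAt σ i) H i b E
  simp only [starEdges_flipAt σ hi, flipAt_self] at hflip
  rw [hflip, hflip, prod_starEdges_edgeLikelihood hk, prod_starEdges_edgeLikelihood hk, hE.2,
    hcard]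
  cases σ i <;> simp [mul_comm]

lemma IsIndifferent.mul_prod_contactEdges_le (hE : IsIndifferent σ H i E)
    (hp : p ∈ Set.Icc 0 s) (hq : q ∈ Set.Icc 0 s) (hs : s ≤ 1) (τ τ' : Fin n → Bool) :
    (1 - #(contactEdges k H i) * s) * ∏ e ∈ contactEdges k H i, edgeLikelihood p q τ E e ≤
      ∏ e ∈ contactEdges k H i, edgeLikelihood p q τ' E e := by
  have hmem (τ : Fin n → Bool) : ∀ e ∈ contactEdges k H i,
      edgeLikelihood p q τ E e ∈ Set.Icc (1 - s) 1 := fun e he => by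
    rw [edgeLikelihood, hE.1 e he, if_neg Bool.false_ne_true]
    have hedge := edgeP_mem hp hq τ e.1
    exact ⟨sub_le_sub_left hedge.2 1, sub_le_self 1 hedge.1⟩
  have hnonneg : ∀ e ∈ contactEdges k H i, 0 ≤ edgeLikelihood p q τ E e := fun e he =>
    (sub_nonneg.2 hs).trans (hmem τ e he).1
  calc (1 - #(contactEdges k H i) * s) * ∏ e ∈ contactEdges k H i, edgeLikelihood p q τ E e
      ≤ (1 - s) ^ #(contactEdges k H i) *
          ∏ e ∈ contactEdges k H i, edgeLikelihood p q τ E e := by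
        refine mul_le_mul_of_nonneg_right ?_ (prod_nonneg hnonneg)
        have hbernoulli := one_add_mul_le_pow (show -2 ≤ -s by linarith) #(contactEdges k H i)
        rwa [mul_neg, ← sub_eq_add_neg, ← sub_eq_add_neg] at hbernoulli
    _ ≤ (1 - s) ^ #(contactEdges k H i) :=
        mul_le_of_le_one_right (pow_nonneg (sub_nonneg.2 hs) _)
          (prod_le_one hnonneg fun e he => (hmem τ e he).2)
    _ ≤ ∏ e ∈ contactEdges k H i, edgeLikelihood p q τ' E e := by
        rw [← prod_const]
        exact prod_le_prod (fun _ _ => sub_nonneg.2 hs) fun e he => (hmem τ' e he).1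

lemma IsIndifferent.mul_hypProb_le_hypProb_flipAt (hE : IsIndifferent σ H i E) (hk : 2 ≤ k)
    (hi : i ∈ H) (hcard : #(starEdges k σ H i true) = #(starEdges k σ H i false))
    (hp : p ∈ Set.Icc 0 s) (hq : q ∈ Set.Icc 0 s) (hs : s ≤ 1) :
    (1 - #(contactEdges k H i) * s) * hypProb p q σ E ≤ hypProb p q (flipAt σ i) E := by
  have hnonneg (A : Finset (KSet n k)) : 0 ≤ ∏ e ∈ A, edgeLikelihood p q σ E e :=
    prod_nonneg fun e _ => edgeLikelihood_nonneg (Set.Icc_subset_Icc_right hs hp)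
      (Set.Icc_subset_Icc_right hs hq) σ E e
  have hrest : ∀ e ∈ (contactEdges k H i ∪
      (starEdges k σ H i true ∪ starEdges k σ H i false))ᶜ,
      edgeLikelihood p q (flipAt σ i) E e = edgeLikelihood p q σ E e := fun e he => by
    simp only [mem_compl, mem_union, not_or] at he
    rw [edgeLikelihood, edgeP_flipAt p q (Bool.forall_bool.2 ⟨he.2.2, he.2.1⟩) he.1,
      edgeLikelihood]
  rw [hypProb_eq_prod, hypProb_eq_prod, prod_eq_contactEdges_mul_starEdges_mul hk σ hi,
    prod_eq_contactEdges_mul_starEdges_mul hk σ hi, hE.prod_starEdges_flipAt hk hi hcard,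
    prod_congr rfl hrest, ← mul_assoc, ← mul_assoc]
  exact mul_le_mul_of_nonneg_right (mul_le_mul_of_nonneg_right
    (hE.mul_prod_contactEdges_le hp hq hs σ _) (mul_nonneg (hnonneg _) (hnonneg _))) (hnonneg _)

lemma hypProb_le_two_mul_hypProb_flipAt_flipAt (hk : 2 ≤ k) (hi : i ∈ H) (hj : j ∈ H)
    (hEi : IsIndifferent σ H i E) (hEj : IsIndifferent σ H j E)
    (hbalanced : #{l | l ∉ H ∧ σ l = true} = #{l | l ∉ H ∧ σ l = false})
    (hp : p ∈ Set.Icc 0 s) (hq : q ∈ Set.Icc 0 s) (hs : s ≤ 1)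
    (hcontact : #H * (n - 2).choose (k - 2) * s ≤ 1 / 4) :
    hypProb p q σ E ≤ 2 * hypProb p q (flipAt (flipAt σ i) j) E := by
  have hp1 := Set.Icc_subset_Icc_right hs hp
  have hq1 := Set.Icc_subset_Icc_right hs hq
  have hcard {l : Fin n} (hl : l ∈ H) :
      #(starEdges k σ H l true) = #(starEdges k σ H l false) := by
    rw [card_starEdges (one_le_two.trans hk) σ hl, hbalanced, card_starEdges (one_le_two.trans hk)
      σ hl]
  have hfactor (l : Fin n) : (3 / 4 : ℝ) ≤ 1 - #(contactEdges k H l) * s := by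
    have hle : (#(contactEdges k H l) : ℝ) ≤ #H * (n - 2).choose (k - 2) := by
      exact_mod_cast card_contactEdges_le H l
    linarith [mul_le_mul_of_nonneg_right hle (hp.1.trans hp.2)]
  have hflip_i : 3 / 4 * hypProb p q σ E ≤ hypProb p q (flipAt σ i) E :=
    (mul_le_mul_of_nonneg_right (hfactor i) (hypProb_nonneg hp1 hq1 σ E)).trans
      (hEi.mul_hypProb_le_hypProb_flipAt hk hi (hcard hi) hp hq hs)
  have hflip_j : 3 / 4 * hypProb p q (flipAt σ i) E ≤ hypProb p q (flipAt (flipAt σ i) j) E :=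
    (mul_le_mul_of_nonneg_right (hfactor j) (hypProb_nonneg hp1 hq1 _ E)).trans
      ((hEj.flip hi).mul_hypProb_le_hypProb_flipAt hk hj
        (by rw [starEdges_flipAt σ hi, starEdges_flipAt σ hi, hcard hj]) hp hq hs)
  linarith [hypProb_nonneg hp1 hq1 σ E]

lemma balanced_comp_equiv (π : Fin n ≃ Fin n) : balanced (σ ∘ π) ↔ balanced σ := by
  have hcard : #{l | (σ ∘ π) l = true} = #{l | σ l = true} :=
    card_equiv π fun l => by simp
  rw [balanced, balanced, hcard]

lemma flipAt_flipAt_eq_comp_swap (hij : σ i ≠ σ j) :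
    flipAt (flipAt σ i) j = σ ∘ Equiv.swap i j := by
  have hne : i ≠ j := fun h => hij (congrArg σ h)
  ext l
  rcases eq_or_ne l j with rfl | hlj
  · rw [flipAt_self, flipAt_of_ne σ hne.symm, Function.comp_apply, Equiv.swap_apply_right,
      Bool.not_eq.2 hij.symm]
  rw [flipAt_of_ne _ hlj]
  rcases eq_or_ne l i with rfl | hli
  · rw [flipAt_self, Function.comp_apply, Equiv.swap_apply_left, Bool.not_eq.2 hij]
  · rw [flipAt_of_ne σ hli, Function.comp_apply, Equiv.swap_apply_of_ne_of_ne hli hlj]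

lemma sigProb_flipAt_flipAt (hij : σ i ≠ σ j) :
    sigProb n (flipAt (flipAt σ i) j) = sigProb n σ := by
  simp only [sigProb, flipAt_flipAt_eq_comp_swap hij, balanced_comp_equiv]

lemma sigProb_nonneg (σ : Fin n → Bool) : 0 ≤ sigProb n σ := by
  rw [sigProb]
  split_ifs <;> positivity

lemma injOn_flipAt_flipAt : Set.InjOn (fun l => flipAt (flipAt σ l) j) {l | l ≠ j} :=
  fun l hl l' _ h => by
    by_contra hne
    have hcontra := congrFun h l
    simp only [flipAt_of_ne _ hl, flipAt_self, flipAt_of_ne σ hne] at hcontra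
    exact Bool.not_ne_self _ hcontra

/-- The probability of the pair `(σ, E)` under the joint law `HSBM(n,p,q;k)`. -/
noncomputable def jointProb (p q : ℝ) (σ : Fin n → Bool) (E : KSet n k → Bool) : ℝ :=
  sigProb n σ * hypProb p q σ E

lemma jointProb_nonneg (hp : p ∈ Set.Icc (0 : ℝ) 1) (hq : q ∈ Set.Icc (0 : ℝ) 1)
    (σ : Fin n → Bool) (E : KSet n k → Bool) : 0 ≤ jointProb p q σ E :=
  mul_nonneg (sigProb_nonneg σ) (hypProb_nonneg hp hq σ E)

lemma card_mul_jointProb_le_two_mul_sum (hk : 2 ≤ k) {S : Finset (Fin n)} (hSH : S ⊆ H)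
    (hS : ∀ i ∈ S, σ i ≠ σ j ∧ IsIndifferent σ H i E) (hj : j ∈ H)
    (hEj : IsIndifferent σ H j E)
    (hbalanced : #{l | l ∉ H ∧ σ l = true} = #{l | l ∉ H ∧ σ l = false})
    (hp : p ∈ Set.Icc 0 s) (hq : q ∈ Set.Icc 0 s) (hs : s ≤ 1)
    (hcontact : #H * (n - 2).choose (k - 2) * s ≤ 1 / 4) :
    #S * jointProb p q σ E ≤ 2 * ∑ τ, jointProb p q τ E := by
  have hne : (S : Set (Fin n)) ⊆ {l | l ≠ j} := fun l hl h => (hS l hl).1 (congrArg σ h)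
  calc #S * jointProb p q σ E = ∑ _i ∈ S, jointProb p q σ E := by
        rw [sum_const, nsmul_eq_mul]
    _ ≤ ∑ i ∈ S, 2 * jointProb p q (flipAt (flipAt σ i) j) E := sum_le_sum fun i hi => by
        rw [jointProb, jointProb, sigProb_flipAt_flipAt (hS i hi).1, mul_left_comm]
        exact mul_le_mul_of_nonneg_left (hypProb_le_two_mul_hypProb_flipAt_flipAt hk (hSH hi) hj
          (hS i hi).2 hEj hbalanced hp hq hs hcontact) (sigProb_nonneg σ)
    _ = 2 * ∑ τ ∈ S.image fun i => flipAt (flipAt σ i) j, jointProb p q τ E := by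
        rw [← mul_sum, sum_image (injOn_flipAt_flipAt.mono hne)]
    _ ≤ 2 * ∑ τ, jointProb p q τ E :=
        mul_le_mul_of_nonneg_left (sum_le_univ_sum_of_nonneg fun τ => jointProb_nonneg
          (Set.Icc_subset_Icc_right hs hp) (Set.Icc_subset_Icc_right hs hq) τ E) zero_le_two

end Indifference

section Exploration

variable {n k : ℕ} {p q s : ℝ} {σ : Fin n → Bool} {H : Finset (Fin n)}

lemma bernoulliProb_trueCount_starEdges_eq (hk : 2 ≤ k) (p q : ℝ) {i : Fin n} {N : ℕ}
    (hcard : ∀ b, #(starEdges k σ H i b) = N) :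
    bernoulliProb (fun e : KSet n k => edgeP p q σ e.1) {E |
      trueCount (starEdges k σ H i true) E = trueCount (starEdges k σ H i false) E} =
        binomialCollision N p q := by
  have hweight (b : Bool) : ∀ e ∈ starEdges k σ H i b,
      edgeP p q σ e.1 = if σ i = b then p else q := fun e he => by
    simp only [edgeP, inCluster_iff_of_mem_starEdges hk he]
  rw [bernoulliProb_trueCount_eq_trueCount (hweight true) (hweight false)
    (disjoint_starEdges_true_false hk σ H i) (hcard true) (hcard false)]
  cases σ i <;> simp [binomialCollision_comm]

lemma bernoulliProb_contactEdges_absent_compl_le (hp : p ∈ Set.Icc 0 s) (hq : q ∈ Set.Icc 0 s)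
    (hs : s ≤ 1) (σ : Fin n → Bool) (H : Finset (Fin n)) (i : Fin n) :
    bernoulliProb (fun e : KSet n k => edgeP p q σ e.1)
        {E | ∀ e ∈ contactEdges k H i, E e = false}ᶜ ≤ #H * (n - 2).choose (k - 2) * s := by
  have hw (e : KSet n k) : edgeP p q σ e.1 ∈ Set.Icc (0 : ℝ) 1 :=
    edgeP_mem (Set.Icc_subset_Icc_right hs hp) (Set.Icc_subset_Icc_right hs hq) σ e.1
  have hunion : {E | ∀ e ∈ contactEdges k H i, E e = false}ᶜ =
      ⋃ e ∈ contactEdges k H i, {E : KSet n k → Bool | E e = true} := by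
    ext E
    simp
  have hcard : (#(contactEdges k H i) : ℝ) ≤ #H * (n - 2).choose (k - 2) := by
    exact_mod_cast card_contactEdges_le H i
  rw [hunion]
  calc bernoulliProb (fun e : KSet n k => edgeP p q σ e.1)
        (⋃ e ∈ contactEdges k H i, {E | E e = true})
      ≤ ∑ e ∈ contactEdges k H i, edgeP p q σ e.1 :=
        (bernoulliProb_biUnion_le hw _ _).trans_eq
          (sum_congr rfl fun e _ => bernoulliProb_coord _ e)
    _ ≤ #(contactEdges k H i) * s := by
        rw [← nsmul_eq_mul]
        exact sum_le_card_nsmul _ _ _ fun e _ => (edgeP_mem hp hq σ e.1).2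
    _ ≤ #H * (n - 2).choose (k - 2) * s :=
        mul_le_mul_of_nonneg_right hcard (hp.1.trans hp.2)

lemma bernoulliProb_forall_not_isIndifferent_le (hk : 2 ≤ k) {K : Finset (Fin n)} (hKH : K ⊆ H)
    {L : ℕ} (hL : ∀ b, #{j | j ∉ H ∧ σ j = b} = L) (hp : p ∈ Set.Icc 0 s)
    (hq : q ∈ Set.Icc 0 s) (hs : s ≤ 1) :
    bernoulliProb (fun e : KSet n k => edgeP p q σ e.1)
        {E | ∀ i ∈ K, ¬ IsIndifferent σ H i E} ≤
      (1 - binomialCollision (L.choose (k - 1)) p q) ^ #K + #H * (n - 2).choose (k - 2) * s := by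
  have hw (e : KSet n k) : edgeP p q σ e.1 ∈ Set.Icc (0 : ℝ) 1 :=
    edgeP_mem (Set.Icc_subset_Icc_right hs hp) (Set.Icc_subset_Icc_right hs hq) σ e.1
  let stars (i : Fin n) : Set (KSet n k) := ⋃ b, starEdges k σ H i b
  let contacts : Set (KSet n k) := ⋃ i ∈ H, contactEdges k H i
  let D (i : Fin n) : Set (KSet n k → Bool) :=
    {E | trueCount (starEdges k σ H i true) E = trueCount (starEdges k σ H i false) E}
  let W (i : Fin n) : Set (KSet n k → Bool) := {E | ∀ e ∈ contactEdges k H i, E e = false}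
  have hstars : (K : Set (Fin n)).PairwiseDisjoint stars := fun i _ j hj hij =>
    Set.disjoint_iUnion_left.2 fun b => Set.disjoint_iUnion_right.2 fun b' =>
      disjoint_coe.2 (disjoint_starEdges_of_ne (hKH hj) hij b b')
  have hcontacts : ∀ i ∈ K, Disjoint (stars i) contacts := fun i _ =>
    Set.disjoint_iUnion_left.2 fun b => Set.disjoint_iUnion₂_right.2 fun j hj =>
      disjoint_coe.2 (disjoint_starEdges_contactEdges i hj b)
  have hD : ∀ i ∈ K, DependsOn (· ∈ D i) (stars i) := fun i _ E E' h => by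
    have hcount (b : Bool) : trueCount (starEdges k σ H i b) E =
        trueCount (starEdges k σ H i b) E' :=
      trueCount_congr fun e he => h e (Set.mem_iUnion.2 ⟨b, he⟩)
    simp only [D, Set.mem_ofPred_eq, hcount]
  have hW : ∀ i ∈ K, DependsOn (· ∈ W i) contacts := fun i hi E E' h =>
    propext (forall₂_congr fun e he => by rw [h e (Set.mem_biUnion (hKH hi) he)])
  have hprob : ∀ i ∈ K, bernoulliProb (fun e : KSet n k => edgeP p q σ e.1) (D i) =
      binomialCollision (L.choose (k - 1)) p q := fun i hi =>
    bernoulliProb_trueCount_starEdges_eq hk p q fun b => by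
      rw [card_starEdges (one_le_two.trans hk) σ (hKH hi), hL]
  have hs0 : 0 ≤ s := hp.1.trans hp.2
  have hsub : {E | ∀ i ∈ K, ¬ IsIndifferent σ H i E} ⊆ {E | ∀ i ∈ K, E ∉ D i ∩ W i} :=
    fun E hE i hi hDW => hE i hi ⟨hDW.2, hDW.1⟩
  exact (bernoulliProb_mono hw hsub).trans
    (bernoulliProb_forall_notMem_inter_le hw K hstars hcontacts hD hW hprob
      (fun i _ => bernoulliProb_contactEdges_absent_compl_le hp hq hs σ H i)
      (mul_nonneg (by positivity) hs0))

lemma exists_embedding_of_card_le {V ι : Type*} [Fintype V] [Fintype ι] {σ : V → Bool}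
    (hcard : ∀ b, Fintype.card ι ≤ #{i | σ i = b}) :
    ∃ u : Bool × ι ↪ V, ∀ x, σ (u x) = x.1 := by
  have hfiber (b : Bool) : Nonempty (ι ↪ {i // σ i = b}) :=
    Function.Embedding.nonempty_of_card_le (by simpa [Fintype.card_subtype] using hcard b)
  let v (b : Bool) : ι ↪ {i // σ i = b} := (hfiber b).some
  refine ⟨⟨fun x => v x.1 x.2, fun ⟨b, x⟩ ⟨b', x'⟩ h => ?_⟩, fun x => (v x.1 x.2).2⟩
  obtain rfl : b = b' := by rw [← (v b x).2, ← (v b' x').2]; exact congrArg σ h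
  exact congrArg (Prod.mk b) ((v b).injective (Subtype.ext h))

lemma card_notMem_map_and_eq {V ι : Type*} [Fintype V] [DecidableEq V] [Fintype ι] {σ : V → Bool}
    {u : Bool × ι ↪ V} (hu : ∀ x, σ (u x) = x.1) (b : Bool) :
    #{j | j ∉ univ.map u ∧ σ j = b} = #{j | σ j = b} - Fintype.card ι := by
  have hslice : ({j | j ∉ univ.map u ∧ σ j = b} : Finset V) =
      ({j | σ j = b} : Finset V) \ univ.map ((Function.Embedding.sectR b ι).trans u) := by
    ext j
    simp only [mem_filter_univ, Finset.mem_sdiff, Finset.mem_map, mem_univ, true_and, Prod.exists,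
      Function.Embedding.trans_apply, Function.Embedding.sectR_apply, and_comm (b := σ j = b)]
    refine and_congr_right fun hj => not_congr ⟨?_, fun ⟨x, hx⟩ => ⟨b, x, hx⟩⟩
    rintro ⟨b', x, rfl⟩
    exact ⟨x, by rw [← hj, hu]⟩
  rw [hslice, card_sdiff_of_subset, card_map, card_univ]
  intro j hj
  obtain ⟨x, -, rfl⟩ := Finset.mem_map.1 hj
  exact mem_filter_univ _ |>.2 (hu (b, x))

/-- The labels `σ` carry at most the fraction `2 / M` of the posterior mass given the hypergraph
`E`. Stated without division, it also covers outcomes of total mass zero. -/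
def IsDiffuse (p q : ℝ) (M : ℕ) (σ : Fin n → Bool) (E : KSet n k → Bool) : Prop :=
  M * jointProb p q σ E ≤ 2 * ∑ τ, jointProb p q τ E

lemma isDiffuse_of_forall_exists_isIndifferent (hk : 2 ≤ k) {M : ℕ} (hM : 0 < M) {h : ℕ}
    {u : Bool × Fin M × Fin h ↪ Fin n} (hu : ∀ x, σ (u x) = x.1) {E : KSet n k → Bool}
    (hE : ∀ b l, ∃ x, IsIndifferent σ (univ.map u) (u (b, l, x)) E)
    (hbalanced : #{j | j ∉ univ.map u ∧ σ j = true} = #{j | j ∉ univ.map u ∧ σ j = false})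
    (hp : p ∈ Set.Icc 0 s) (hq : q ∈ Set.Icc 0 s) (hs : s ≤ 1)
    (hcontact : #(univ.map u) * (n - 2).choose (k - 2) * s ≤ 1 / 4) :
    IsDiffuse p q M σ E := by
  choose x hx using hE
  let pick : Fin M ↪ Fin n := ⟨fun l => u (true, l, x true l), fun l l' hl => by
    simpa using congrArg (·.2.1) (u.injective hl)⟩
  have hmem (y : Bool × Fin M × Fin h) : u y ∈ univ.map u := mem_map_of_mem u (mem_univ y)
  have hcard : #(univ.map pick) = M := by rw [card_map, card_univ, Fintype.card_fin]
  rw [IsDiffuse, ← hcard]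
  refine card_mul_jointProb_le_two_mul_sum hk (fun i hi => ?_) (fun i hi => ?_)
    (hmem (false, ⟨0, hM⟩, x false ⟨0, hM⟩)) (hx false ⟨0, hM⟩) hbalanced hp hq hs hcontact
  all_goals obtain ⟨l, -, rfl⟩ := Finset.mem_map.1 hi
  · exact hmem _
  · exact ⟨by rw [hu]; exact (hu _).trans_ne Bool.noConfusion, hx true l⟩

lemma balanced.card_filter_eq {m : ℕ} {σ : Fin (2 * m) → Bool} (hσ : balanced σ) (b : Bool) :
    #{i | σ i = b} = m := by
  have hcompl := card_filter_add_card_filter_not (s := univ) fun i => σ i = true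
  simp only [Bool.not_eq_true, card_univ, Fintype.card_fin] at hcompl
  rw [balanced] at hσ
  cases b <;> omega

lemma bernoulliProb_not_isDiffuse_le_of_embedding (hk : 2 ≤ k) {M h L : ℕ} (hM : 0 < M)
    {u : Bool × Fin M × Fin h ↪ Fin n} (hu : ∀ x, σ (u x) = x.1)
    (hL : ∀ b, #{j | j ∉ univ.map u ∧ σ j = b} = L) (hp : p ∈ Set.Icc 0 s)
    (hq : q ∈ Set.Icc 0 s) (hs : s ≤ 1)
    (hcontact : #(univ.map u) * (n - 2).choose (k - 2) * s ≤ 1 / 4) :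
    bernoulliProb (fun e : KSet n k => edgeP p q σ e.1) {E | ¬ IsDiffuse p q M σ E} ≤
      2 * M * ((1 - binomialCollision (L.choose (k - 1)) p q) ^ h +
        #(univ.map u) * (n - 2).choose (k - 2) * s) := by
  have hw (e : KSet n k) : edgeP p q σ e.1 ∈ Set.Icc (0 : ℝ) 1 :=
    edgeP_mem (Set.Icc_subset_Icc_right hs hp) (Set.Icc_subset_Icc_right hs hq) σ e.1
  let group (c : Bool × Fin M) : Finset (Fin n) :=
    univ.map ((Function.Embedding.sectR c.2 (Fin h)).trans
      ((Function.Embedding.sectR c.1 (Fin M × Fin h)).trans u))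
  have hgroup (c : Bool × Fin M) : group c ⊆ univ.map u := fun i hi => by
    obtain ⟨x, -, rfl⟩ := Finset.mem_map.1 hi
    exact mem_map_of_mem u (mem_univ (c.1, c.2, x))
  have hcard (c : Bool × Fin M) : #(group c) = h := by
    rw [card_map, card_univ, Fintype.card_fin]
  have hcover : {E : KSet n k → Bool | ¬ IsDiffuse p q M σ E} ⊆
      ⋃ c ∈ (univ : Finset (Bool × Fin M)),
        {E | ∀ i ∈ group c, ¬ IsIndifferent σ (univ.map u) i E} := fun E hE => by
    contrapose! hE
    simp only [Set.mem_iUnion, mem_univ, Set.mem_ofPred_eq, exists_prop, true_and, not_exists,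
      not_forall, not_not] at hE ⊢
    refine isDiffuse_of_forall_exists_isIndifferent hk hM hu (fun b l => ?_)
      ((hL true).trans (hL false).symm) hp hq hs hcontact
    obtain ⟨i, hi, hind⟩ := hE (b, l)
    obtain ⟨x, -, rfl⟩ := Finset.mem_map.1 hi
    exact ⟨x, hind⟩
  refine (bernoulliProb_mono hw hcover).trans ((bernoulliProb_biUnion_le hw _ _).trans ?_)
  refine (sum_le_sum fun c _ =>
    bernoulliProb_forall_not_isIndifferent_le hk (hgroup c) hL hp hq hs).trans_eq ?_
  simp only [hcard, sum_const, card_univ, Fintype.card_prod, Fintype.card_bool, Fintype.card_fin,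
    nsmul_eq_mul, Nat.cast_mul, Nat.cast_ofNat]

lemma bernoulliProb_not_isDiffuse_le (hk : 2 ≤ k) {m M h : ℕ} (hM : 0 < M) (hMh : M * h ≤ m)
    (hp : p ∈ Set.Icc 0 s) (hq : q ∈ Set.Icc 0 s) (hs : s ≤ 1) {r η : ℝ}
    (hr : r ≤ binomialCollision ((m - M * h).choose (k - 1)) p q)
    (hη : (2 * (M * h) : ℕ) * (2 * m - 2).choose (k - 2) * s ≤ η) (hη4 : η ≤ 1 / 4)
    {σ : Fin (2 * m) → Bool} (hσ : balanced σ) :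
    bernoulliProb (fun e : KSet (2 * m) k => edgeP p q σ e.1) {E | ¬ IsDiffuse p q M σ E} ≤
      2 * M * (Real.exp (-(r * h)) + η) := by
  have hp1 := Set.Icc_subset_Icc_right hs hp
  have hq1 := Set.Icc_subset_Icc_right hs hq
  obtain ⟨u, hu⟩ := exists_embedding_of_card_le (σ := σ) (ι := Fin M × Fin h) fun b => by
    simpa [hσ.card_filter_eq b] using hMh
  have hoff (b : Bool) : #{j | j ∉ univ.map u ∧ σ j = b} = m - M * h := by
    rw [card_notMem_map_and_eq hu b, hσ.card_filter_eq b, Fintype.card_prod, Fintype.card_fin,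
      Fintype.card_fin]
  have hcardH : #(univ.map u) = 2 * (M * h) := by
    simp only [card_map, card_univ, Fintype.card_prod, Fintype.card_bool, Fintype.card_fin]
  have hmiss : (1 - binomialCollision ((m - M * h).choose (k - 1)) p q) ^ h ≤
      Real.exp (-(r * h)) := by
    rw [mul_comm r, ← mul_neg, Real.exp_nat_mul]
    refine pow_le_pow_left₀ (sub_nonneg.2 (binomialCollision_le_one _ hp1 hq1)) ?_ h
    exact (sub_le_sub_left hr 1).trans (Real.one_sub_le_exp_neg r)
  rw [← hcardH] at hη
  exact (bernoulliProb_not_isDiffuse_le_of_embedding hk hM hu hoff hp hq hs (hη.trans hη4)).trans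
    (by gcongr)

end Exploration

section BayesRisk

variable {n k m M : ℕ} {p q δ : ℝ} {P Q : (Fin n → Bool) → (KSet n k → Bool) → Prop}

lemma exists_balanced (m : ℕ) : ∃ σ : Fin (2 * m) → Bool, balanced σ := by
  obtain ⟨S, -, hS⟩ := exists_subset_card_eq (s := (univ : Finset (Fin (2 * m)))) (n := m) (by
    rw [card_univ, Fintype.card_fin]
    exact Nat.le_mul_of_pos_left m two_pos)
  exact ⟨fun i => decide (i ∈ S), by simp [balanced, hS]⟩

lemma sum_sigProb (m : ℕ) : ∑ σ, sigProb (2 * m) σ = 1 := by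
  obtain ⟨σ, hσ⟩ := exists_balanced m
  have hpos : 0 < #{τ : Fin (2 * m) → Bool | balanced τ} :=
    card_pos.2 ⟨σ, mem_filter_univ σ |>.2 hσ⟩
  simp only [sigProb]
  rw [← sum_filter, sum_const, nsmul_eq_mul, mul_one_div_cancel (Nat.cast_ne_zero.2 hpos.ne')]

lemma prEvent_eq_sum_sigProb_mul_bernoulliProb (p q : ℝ)
    (P : (Fin n → Bool) → (KSet n k → Bool) → Prop) :
    prEvent n k p q P = ∑ σ, sigProb n σ *
      bernoulliProb (fun e : KSet n k => edgeP p q σ e.1) {E | P σ E} := by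
  simp only [prEvent, bernoulliProb, bernoulliExp_apply, mul_sum, mul_assoc, Set.indicator_apply,
    Set.mem_ofPred_eq, Pi.one_apply, hypProb_eq_bernoulliWeight]

lemma prEvent_mono (hp : p ∈ Set.Icc (0 : ℝ) 1) (hq : q ∈ Set.Icc (0 : ℝ) 1)
    (h : ∀ σ E, P σ E → Q σ E) : prEvent n k p q P ≤ prEvent n k p q Q := by
  simp only [prEvent]
  gcongr with σ _ E
  · exact jointProb_nonneg hp hq σ E
  · by_cases hP : P σ E
    · simp [hP, h σ E hP]
    · rw [if_neg hP]
      split_ifs <;> norm_num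

lemma prEvent_or_le (hp : p ∈ Set.Icc (0 : ℝ) 1) (hq : q ∈ Set.Icc (0 : ℝ) 1)
    (P Q : (Fin n → Bool) → (KSet n k → Bool) → Prop) :
    prEvent n k p q (fun σ E => P σ E ∨ Q σ E) ≤ prEvent n k p q P + prEvent n k p q Q := by
  simp only [prEvent, ← sum_add_distrib, ← mul_add]
  gcongr with σ _ E
  · exact jointProb_nonneg hp hq σ E
  · by_cases hP : P σ E <;> by_cases hQ : Q σ E <;> simp [hP, hQ]

lemma prEvent_le_of_forall_balanced
    {P : (Fin (2 * m) → Bool) → (KSet (2 * m) k → Bool) → Prop}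
    (h : ∀ σ, balanced σ →
      bernoulliProb (fun e : KSet (2 * m) k => edgeP p q σ e.1) {E | P σ E} ≤ δ) :
    prEvent (2 * m) k p q P ≤ δ := by
  rw [prEvent_eq_sum_sigProb_mul_bernoulliProb, ← one_mul δ, ← sum_sigProb m, sum_mul]
  refine sum_le_sum fun σ _ => ?_
  by_cases hσ : balanced σ
  · exact mul_le_mul_of_nonneg_left (h σ hσ) (sigProb_nonneg σ)
  · rw [sigProb, if_neg hσ, zero_mul, zero_mul]

lemma sum_sum_jointProb (m k : ℕ) (p q : ℝ) :
    ∑ E : KSet (2 * m) k → Bool, ∑ σ, jointProb p q σ E = 1 := by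
  rw [sum_comm]
  simp only [jointProb, ← mul_sum, hypProb_eq_bernoulliWeight, sum_bernoulliWeight, mul_one,
    sum_sigProb]

lemma prEvent_true (m k : ℕ) (p q : ℝ) : prEvent (2 * m) k p q (fun _ _ => True) = 1 := by
  rw [← sum_sum_jointProb m k p q, sum_comm]
  simp only [prEvent, jointProb, if_true, mul_one]

lemma prEvent_le_one (hp : p ∈ Set.Icc (0 : ℝ) 1) (hq : q ∈ Set.Icc (0 : ℝ) 1)
    (P : (Fin (2 * m) → Bool) → (KSet (2 * m) k → Bool) → Prop) :
    prEvent (2 * m) k p q P ≤ 1 :=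
  (prEvent_mono hp hq fun _ _ _ => trivial).trans_eq (prEvent_true m k p q)

lemma prEvent_eq_and_isDiffuse_le (hM : 0 < M) (hp : p ∈ Set.Icc (0 : ℝ) 1)
    (hq : q ∈ Set.Icc (0 : ℝ) 1) (f : (KSet (2 * m) k → Bool) → Fin (2 * m) → Bool) :
    prEvent (2 * m) k p q (fun σ E => f E = σ ∧ IsDiffuse p q M σ E) ≤ 2 / M := by
  have hM' : (0 : ℝ) < M := Nat.cast_pos.2 hM
  have hmass : 2 / (M : ℝ) = ∑ E : KSet (2 * m) k → Bool, 2 / M * ∑ σ, jointProb p q σ E := by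
    rw [← mul_sum, sum_sum_jointProb, mul_one]
  rw [prEvent, sum_comm, hmass]
  refine sum_le_sum fun E _ => ?_
  rw [Fintype.sum_eq_single (f E) fun σ hσ => by rw [if_neg (hσ.symm ·.1), mul_zero]]
  split_ifs with h
  · rw [mul_one, div_mul_eq_mul_div, le_div_iff₀' hM']
    exact h.2
  · rw [mul_zero]
    exact mul_nonneg (by positivity) (sum_nonneg fun σ _ => jointProb_nonneg hp hq σ E)

lemma prEvent_eq_le (hM : 0 < M) (hp : p ∈ Set.Icc (0 : ℝ) 1) (hq : q ∈ Set.Icc (0 : ℝ) 1)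
    (f : (KSet (2 * m) k → Bool) → Fin (2 * m) → Bool)
    (hδ : prEvent (2 * m) k p q (fun σ E => ¬ IsDiffuse p q M σ E) ≤ δ) :
    prEvent (2 * m) k p q (fun σ E => f E = σ) ≤ 2 / M + δ := by
  refine le_trans (prEvent_mono hp hq fun σ E hf => ?_) ((prEvent_or_le hp hq _ _).trans
    (add_le_add (prEvent_eq_and_isDiffuse_le hM hp hq f) hδ))
  exact (em (IsDiffuse p q M σ E)).imp_left fun hdiffuse => ⟨hf, hdiffuse⟩

lemma negB_negB (σ : Fin n → Bool) : negB (negB σ) = σ :=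
  funext fun i => Bool.not_not (σ i)

lemma one_sub_le_prEvent_ne_and_ne_negB (hM : 0 < M) (hp : p ∈ Set.Icc (0 : ℝ) 1)
    (hq : q ∈ Set.Icc (0 : ℝ) 1) (f : (KSet (2 * m) k → Bool) → Fin (2 * m) → Bool)
    (hδ : prEvent (2 * m) k p q (fun σ E => ¬ IsDiffuse p q M σ E) ≤ δ) :
    1 - 2 * (2 / M + δ) ≤ prEvent (2 * m) k p q (fun σ E => f E ≠ σ ∧ f E ≠ negB σ) := by
  have hcases : (1 : ℝ) ≤ prEvent (2 * m) k p q (fun σ E => f E ≠ σ ∧ f E ≠ negB σ) +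
      (prEvent (2 * m) k p q (fun σ E => f E = σ) +
        prEvent (2 * m) k p q (fun σ E => negB (f E) = σ)) := by
    rw [← prEvent_true m k p q]
    refine (prEvent_mono hp hq fun σ E _ => ?_).trans ((prEvent_or_le hp hq _ _).trans
      (add_le_add_right (prEvent_or_le hp hq _ _) _))
    by_cases hneg : f E = negB σ
    · exact .inr (.inr (by rw [hneg, negB_negB]))
    · exact (em' (f E = σ)).imp (⟨·, hneg⟩) .inl
  linarith [prEvent_eq_le hM hp hq f hδ, prEvent_eq_le hM hp hq (fun E => negB (f E)) hδ]

end BayesRisk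

section Threshold

open Asymptotics

variable {k : ℕ} {α β c c' : ℝ}

lemma tendsto_two_mul_rpow_atTop {a : ℝ} (ha : 0 < a) :
    Tendsto (fun m : ℕ => ((2 * m : ℕ) : ℝ) ^ a) atTop atTop :=
  (tendsto_rpow_atTop ha).comp (tendsto_natCast_atTop_atTop.comp tendsto_two_mul_atTop)

lemma eventually_mul_floor_rpow_le (hc : c < 1) (M : ℕ) :
    ∀ᶠ m : ℕ in atTop, M * ⌊((2 * m : ℕ) : ℝ) ^ c⌋₊ ≤ m := by
  filter_upwards [(tendsto_two_mul_rpow_atTop (sub_pos.2 hc)).eventually_ge_atTop (2 * M : ℝ),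
    eventually_gt_atTop 0] with m hm hpos
  have hpos' : (0 : ℝ) < (2 * m : ℕ) := by exact_mod_cast Nat.mul_pos two_pos hpos
  have hsplit : ((2 * m : ℕ) : ℝ) ^ (1 - c) * ((2 * m : ℕ) : ℝ) ^ c = 2 * m := by
    rw [← Real.rpow_add hpos', sub_add_cancel, Real.rpow_one, Nat.cast_mul, Nat.cast_ofNat]
  have hfloor : (M : ℝ) * ⌊((2 * m : ℕ) : ℝ) ^ c⌋₊ ≤ M * ((2 * m : ℕ) : ℝ) ^ c :=
    mul_le_mul_of_nonneg_left (Nat.floor_le (by positivity)) (Nat.cast_nonneg M)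
  have hbound := mul_le_mul_of_nonneg_right hm (Real.rpow_nonneg hpos'.le c)
  exact_mod_cast (by linarith : (M : ℝ) * ⌊((2 * m : ℕ) : ℝ) ^ c⌋₊ ≤ m)

lemma tendsto_exp_neg_rpow_mul_floor (hc : 0 ≤ c) (hcc' : c < c') :
    Tendsto (fun m : ℕ => Real.exp (-(((2 * m : ℕ) : ℝ) ^ (-c) * ⌊((2 * m : ℕ) : ℝ) ^ c'⌋₊)))
      atTop (nhds 0) := by
  refine Real.tendsto_exp_neg_atTop_nhds_zero.comp (tendsto_atTop_mono' _ ?_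
    (tendsto_atTop_add_const_right _ (-1) (tendsto_two_mul_rpow_atTop (sub_pos.2 hcc'))))
  filter_upwards [eventually_gt_atTop 0] with m hm
  have hone : (1 : ℝ) ≤ (2 * m : ℕ) := by exact_mod_cast Nat.mul_pos two_pos hm
  have hsplit : ((2 * m : ℕ) : ℝ) ^ (c' - c) =
      ((2 * m : ℕ) : ℝ) ^ (-c) * ((2 * m : ℕ) : ℝ) ^ c' := by
    rw [← Real.rpow_add (one_pos.trans_le hone), neg_add_eq_sub]
  have hle_one : ((2 * m : ℕ) : ℝ) ^ (-c) ≤ 1 :=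
    Real.rpow_le_one_of_one_le_of_nonpos hone (neg_nonpos.2 hc)
  have hfloor := mul_le_mul_of_nonneg_left (Nat.sub_one_lt_floor (((2 * m : ℕ) : ℝ) ^ c')).le
    (Real.rpow_nonneg (Nat.cast_nonneg (2 * m)) (-c))
  linarith

lemma tendsto_rpow_mul_log_div_sub_one (hc : c < 1) :
    Tendsto (fun x : ℝ => x ^ c * (Real.log x / (x - 1))) atTop (nhds 0) := by
  have hlog : (fun x : ℝ => x ^ c * Real.log x) =o[atTop] fun x => x ^ c * x ^ (1 - c) :=
    (isBigO_refl _ _).mul_isLittleO (isLittleO_log_rpow_atTop (sub_pos.2 hc))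
  have hid : (fun x : ℝ => x ^ c * x ^ (1 - c)) =ᶠ[atTop] id := by
    filter_upwards [eventually_gt_atTop 0] with x hx
    rw [← Real.rpow_add hx, add_sub_cancel, Real.rpow_one, id]
  have hsub : (fun x : ℝ => x - 1) ~[atTop] id :=
    IsEquivalent.refl.sub_isLittleO (isLittleO_const_id_atTop 1)
  simpa only [mul_div_assoc] using
    ((hlog.trans_eventuallyEq hid).trans_isBigO hsub.symm.isBigO).tendsto_div_nhds_zero

/-- The contact edges of an exploration set of size `n ^ c` are few in expectation: their number is
of order `n ^ (c + k - 2)`, and each is present with probability of order `n ^ (1 - k) * log n`. -/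
lemma tendsto_contact_bound (hk : 2 ≤ k) (hc : c < 1) (M : ℕ) {γ : ℝ} (hγ : 0 ≤ γ) :
    Tendsto (fun m : ℕ => (2 * (M * ⌊((2 * m : ℕ) : ℝ) ^ c⌋₊) : ℕ) *
      (2 * m - 2).choose (k - 2) * pParam k γ (2 * m)) atTop (nhds 0) := by
  have hlimit := (((tendsto_rpow_mul_log_div_sub_one hc).comp
    (tendsto_natCast_atTop_atTop.comp tendsto_two_mul_atTop)).const_mul
      (2 * M * ((k - 1) * γ) : ℝ))
  rw [mul_zero] at hlimit
  refine squeeze_zero' (Eventually.of_forall fun m =>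
    mul_nonneg (by positivity) (pParam_nonneg k _ hγ)) ?_ hlimit
  filter_upwards [eventually_ge_atTop k] with m hm
  have hfloor := Nat.floor_le (Real.rpow_nonneg (Nat.cast_nonneg (α := ℝ) (2 * m)) c)
  calc ((2 * (M * ⌊((2 * m : ℕ) : ℝ) ^ c⌋₊) : ℕ) : ℝ) * (2 * m - 2).choose (k - 2) *
        pParam k γ (2 * m)
      = 2 * M * ⌊((2 * m : ℕ) : ℝ) ^ c⌋₊ *
          ((2 * m - 2).choose (k - 2) * pParam k γ (2 * m)) := by push_cast; ring
    _ ≤ 2 * M * ((2 * m : ℕ) : ℝ) ^ c *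
          ((2 * m - 2).choose (k - 2) * pParam k γ (2 * m)) := by
        have := pParam_nonneg k (2 * m) hγ
        gcongr
    _ = _ := by
        rw [choose_sub_two_mul_pParam hk (by omega)]
        simp only [Function.comp_apply]
        ring

lemma pParam_mono (k n : ℕ) {γ γ' : ℝ} (h : γ ≤ γ') : pParam k γ n ≤ pParam k γ' n := by
  rw [pParam_eq_mul, pParam_eq_mul k n γ']
  exact mul_le_mul_of_nonneg_right h (pParam_nonneg k n zero_le_one)

lemma eventually_pParam_mem_Icc (hk : 2 ≤ k) {γ : ℝ} (hγ : 0 ≤ γ) :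
    ∀ᶠ m : ℕ in atTop, pParam k γ (2 * m) ∈ Set.Icc (0 : ℝ) 1 := by
  filter_upwards [((tendsto_pParam hk γ).comp tendsto_two_mul_atTop).eventually_le_const one_pos]
    with m hm
  exact ⟨pParam_nonneg k _ hγ, hm⟩

lemma eventually_prEvent_not_isDiffuse_le (hk : 2 ≤ k) (hα : 0 ≤ α) (hβ : 0 ≤ β)
    (hI : (√α - √β) ^ 2 / 2 ^ (k - 1) < 1) {M : ℕ} (hM : 0 < M) {δ : ℝ} (hδ : 0 < δ) :
    ∀ᶠ m : ℕ in atTop, prEvent (2 * m) k (pParam k α (2 * m)) (pParam k β (2 * m))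
      (fun σ E => ¬ IsDiffuse (pParam k α (2 * m)) (pParam k β (2 * m)) M σ E) ≤ δ := by
  obtain ⟨c, hIc, hc⟩ := exists_between hI
  obtain ⟨c', hcc', hc'⟩ := exists_between hc
  have hc0 : 0 ≤ c := le_trans (by positivity) hIc.le
  have hγ : 0 ≤ max α β := hα.trans (le_max_left α β)
  have hcontact := tendsto_contact_bound hk hc' M hγ
  have herror := ((tendsto_exp_neg_rpow_mul_floor hc0 hcc').add hcontact).const_mul (2 * M : ℝ)
  rw [add_zero, mul_zero] at herror
  filter_upwards [eventually_mul_floor_rpow_le hc' M,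
    eventually_rpow_neg_le_binomialCollision hk hα hβ hIc,
    hcontact.eventually_le_const (by norm_num : (0 : ℝ) < 1 / 4),
    eventually_pParam_mem_Icc hk hγ, herror.eventually_le_const hδ] with m hMh hr hη hs hmδ
  refine prEvent_le_of_forall_balanced fun σ hσ => ?_
  exact (bernoulliProb_not_isDiffuse_le hk hM hMh
    ⟨pParam_nonneg k _ hα, pParam_mono k _ (le_max_left α β)⟩
    ⟨pParam_nonneg k _ hβ, pParam_mono k _ (le_max_right α β)⟩ hs.2
    (hr _ (Nat.choose_le_choose _ (Nat.sub_le _ _))) le_rfl hη hσ).trans hmδ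

end Threshold

/-- If `I(α,β) < 1` then exact recovery in `HSBM(n,p,q;k)` is impossible:
every estimator fails with probability `1 - o(1)` as `n = 2m → ∞`. -/
theorem hsbm_exact_recovery_impossible (k : ℕ) (hk : 2 ≤ k) (α β : ℝ) (hα : 0 < α) (hβ : 0 < β)
    (hI : (Real.sqrt α - Real.sqrt β) ^ 2 / 2 ^ (k - 1) < 1) :
    ∀ est : (m : ℕ) → (KSet (2 * m) k → Bool) → (Fin (2 * m) → Bool),
      Tendsto (fun m : ℕ =>
          prEvent (2 * m) k (pParam k α (2 * m)) (pParam k β (2 * m))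
            (fun σ E => est m E ≠ σ ∧ est m E ≠ negB σ))
        atTop (nhds 1) := by
  intro est
  have hp := eventually_pParam_mem_Icc hk hα.le
  have hq := eventually_pParam_mem_Icc hk hβ.le
  refine tendsto_order.2 ⟨fun a ha => ?_, fun a ha => ?_⟩
  · obtain ⟨M, hM⟩ := exists_nat_gt (8 / (1 - a))
    have ha' : 0 < 1 - a := sub_pos.2 ha
    have hM0 : (0 : ℝ) < M := (div_pos (by norm_num) ha').trans hM
    have hsmall : 2 / (M : ℝ) < (1 - a) / 4 := by
      rw [div_lt_iff₀ ha'] at hM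
      rw [div_lt_iff₀ hM0]
      linarith
    filter_upwards [hp, hq, eventually_prEvent_not_isDiffuse_le hk hα.le hβ.le hI
      (Nat.cast_pos.1 hM0) (div_pos ha' four_pos)] with m hpm hqm hdiffuse
    linarith [one_sub_le_prEvent_ne_and_ne_negB (Nat.cast_pos.1 hM0) hpm hqm (est m) hdiffuse]
  · filter_upwards [hp, hq] with m hpm hqm
    exact (prEvent_le_one hpm hqm _).trans_lt ha
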